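/- arXiv:1610.04165 — 5 statements merged into one kernel-verified Lean document; each statement's English description precedes it below -/
import Mathlib

section
/- Let H be an infinite-dimensional complex Hilbert space, let a < b be real numbers, and let f : (a,b) → ℝ be a continuous function that is operator convex on (a,b), i.e., f(s·A + (1−s)·B) ≤ s·f(A) + (1−s)·f(B) for all s ∈ [0,1] and all selfadjoint A, B ∈ B(H) with spectra in (a,b). If f is nonlinear (f does not coincide on (a,b) with any affine function x ↦ αx + β), then f is strictly operator convex on (a,b): for all s ∈ (0,1) and all selfadjoint A, B ∈ B(H) with spectra in (a,b) such that A − B is invertible, the operator s·f(A) + (1−s)·f(B) − f(s·A + (1−s)·B) is positive and invertible. -/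
/-!
**Scalars.** Apply operator convexity to two rank-one perturbations `c + (w - c) E` and
`c + (t - c) Y` of the scalar `c`, with `E` and `Y` nearly parallel projections. A cubic minorant of
`f` that is tangent to `f` at `c` then improves to a quadratic minorant. A convex function which is
not affine has such cubic minorants, uniformly for `c` in a compact interval, so `f` is strongly
convex on compact intervals.

**Operators.** Identify `H ⊕ H` with `H` by a Cuntz pair and rotate `diag(A, B)` by the angle `θ`
with `cos² θ = t`. The upper left block becomes `t A + (1 - t) B`, the off-diagonal ones
`√(t (1 - t)) (A - B)`. For a unit vector `e` in the second summand, compressing to `H ⊕ ℂ e` leaves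
`t A + (1 - t) B` bordered by the vector `x = √(t (1 - t)) (A - B) e`. Strong convexity with modulus
`m` makes the quadratic form of `f` at `x` exceed its value without the border by at least
`m / 2 * ‖x‖ ^ 4`: expand `x` in eigenvectors in finite dimension, and pass to a Krylov space in
general. Since `A - B` is onto, `x` ranges over all directions and the Jensen gap is bounded below.
-/

open ContinuousLinearMap InnerProductSpace Set

/-- Operator convexity of a scalar function `f` on the set `J`, tested on the selfadjoint operators
on `H` with spectrum in `J`. -/
def OperatorConvexOn (H : Type*) [NormedAddCommGroup H] [InnerProductSpace ℂ H] [CompleteSpace H]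
    (J : Set ℝ) (f : ℝ → ℝ) : Prop :=
  ∀ s : ℝ, s ∈ Icc (0 : ℝ) 1 → ∀ A B : H →L[ℂ] H, IsSelfAdjoint A → IsSelfAdjoint B →
    spectrum ℝ A ⊆ J → spectrum ℝ B ⊆ J →
    cfc f (s • A + (1 - s) • B) ≤ s • cfc f A + (1 - s) • cfc f B

/-- The gap `t f(A) + (1 - t) f(B) - f(t A + (1 - t) B)` in Jensen's operator inequality. -/
noncomputable def jensenGap {H : Type*} [NormedAddCommGroup H] [InnerProductSpace ℂ H]
    [CompleteSpace H] (f : ℝ → ℝ) (t : ℝ) (A B : H →L[ℂ] H) : H →L[ℂ] H :=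
  t • cfc f A + (1 - t) • cfc f B - cfc f (t • A + (1 - t) • B)

/-- Strict operator convexity of `f` on `J`: proper convex combinations of operators with
invertible difference have a positive invertible Jensen gap. -/
def StrictOperatorConvexOn (H : Type*) [NormedAddCommGroup H] [InnerProductSpace ℂ H]
    [CompleteSpace H] (J : Set ℝ) (f : ℝ → ℝ) : Prop :=
  ∀ s : ℝ, s ∈ Ioo (0 : ℝ) 1 → ∀ A B : H →L[ℂ] H, IsSelfAdjoint A → IsSelfAdjoint B →
    spectrum ℝ A ⊆ J → spectrum ℝ B ⊆ J → IsUnit (A - B) →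
    0 ≤ jensenGap f s A B ∧ IsUnit (jensenGap f s A B)

section Hilbert

variable {H : Type*} [NormedAddCommGroup H] [InnerProductSpace ℂ H] [CompleteSpace H]
  {A B : H →L[ℂ] H} {l r : ℝ} {f : ℝ → ℝ} {J : Set ℝ}

theorem mem_Icc_algebraMap_iff :
    A ∈ Icc (algebraMap ℝ (H →L[ℂ] H) l) (algebraMap ℝ (H →L[ℂ] H) r) ↔
      IsSelfAdjoint A ∧ spectrum ℝ A ⊆ Icc l r := by
  refine ⟨fun h => ?_, fun ⟨hA, h⟩ => ⟨(algebraMap_le_iff_le_spectrum hA).2 fun x hx => (h hx).1,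
    (le_algebraMap_iff_spectrum_le hA).2 fun x hx => (h hx).2⟩⟩
  have hA : IsSelfAdjoint A := by
    simpa using (IsSelfAdjoint.of_nonneg (sub_nonneg.2 h.1)).add
      (IsSelfAdjoint.algebraMap (H →L[ℂ] H) (.all l))
  exact ⟨hA, fun x hx => ⟨(algebraMap_le_iff_le_spectrum hA).1 h.1 x hx,
    (le_algebraMap_iff_spectrum_le hA).1 h.2 x hx⟩⟩

omit [CompleteSpace H] in
theorem re_inner_apply_le_of_le (h : A ≤ B) (v : H) :
    (inner ℂ v (A v)).re ≤ (inner ℂ v (B v)).re := by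
  simpa [inner_sub_right] using ((ContinuousLinearMap.le_def _ _).1 h).re_inner_nonneg_right v

namespace OperatorConvexOn

theorem mono {K : Set ℝ} (hf : OperatorConvexOn H J f) (hK : K ⊆ J) : OperatorConvexOn H K f :=
  fun s hs A B hA hB hAK hBK => hf s hs A B hA hB (hAK.trans hK) (hBK.trans hK)

theorem convexOn [Nontrivial H] (hf : OperatorConvexOn H J f) (hJ : Convex ℝ J) :
    ConvexOn ℝ J f := by
  refine ⟨hJ, fun x hx y hy s t hs ht hst => ?_⟩
  obtain rfl : t = 1 - s := by linarith
  have hspec : ∀ u ∈ J, spectrum ℝ (algebraMap ℝ (H →L[ℂ] H) u) ⊆ J := fun u hu => by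
    rw [spectrum.scalar_eq]; exact singleton_subset_iff.2 hu
  have hcomb : ∀ a b : ℝ, s • algebraMap ℝ (H →L[ℂ] H) a + (1 - s) • algebraMap ℝ (H →L[ℂ] H) b =
      algebraMap ℝ _ (s • a + (1 - s) • b) := fun a b => by
    simp [Algebra.algebraMap_eq_smul_one, mul_smul, add_smul]
  have h := hf s ⟨hs, by linarith⟩ (algebraMap ℝ _ x) (algebraMap ℝ _ y)
    (.algebraMap _ (.all x)) (.algebraMap _ (.all y)) (hspec x hx) (hspec y hy)
  simp only [hcomb, cfc_algebraMap] at h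
  obtain ⟨u, hu⟩ := exists_norm_eq H zero_le_one
  simpa [Algebra.algebraMap_eq_smul_one, inner_smul_right_eq_smul, hu] using
    re_inner_apply_le_of_le h u

end OperatorConvexOn

end Hilbert

/-! ### Convex functions on the line -/

section Scalar

variable {f g : ℝ → ℝ} {J : Set ℝ} {l r c z p : ℝ}

theorem exists_Icc_subset_of_isOpen_of_isCompact {K : Set ℝ} (hJ : IsOpen J) (hJc : Convex ℝ J)
    (hK : IsCompact K) (hne : K.Nonempty) (hKJ : K ⊆ J) :
    ∃ l r : ℝ, l < r ∧ Icc l r ⊆ J ∧ K ⊆ Ioo l r := by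
  obtain ⟨a, haK, ha⟩ := hK.exists_isLeast hne
  obtain ⟨b, hbK, hb⟩ := hK.exists_isGreatest hne
  obtain ⟨l, hla, hlJ⟩ := exists_Ioc_subset_of_mem_nhds (hJ.mem_nhds (hKJ haK)) (exists_lt a)
  obtain ⟨r, hbr, hrJ⟩ := exists_Ico_subset_of_mem_nhds (hJ.mem_nhds (hKJ hbK)) (exists_gt b)
  obtain ⟨l', hl', hl'a⟩ := exists_between hla
  obtain ⟨r', hbr', hr'⟩ := exists_between hbr
  refine ⟨l', r', hl'a.trans_le ((ha hbK).trans hbr'.le), ?_, fun x hx =>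
    ⟨hl'a.trans_le (ha hx), (hb hx).trans_lt hbr'⟩⟩
  exact hJc.ordConnected.out (hlJ ⟨hl', hl'a.le⟩) (hrJ ⟨hbr'.le, hr'⟩)

theorem convexOn_sub_affine (hf : ConvexOn ℝ J f) (a b : ℝ) :
    ConvexOn ℝ J fun u => f u - (a + b * u) := by
  refine hf.sub ⟨hf.1, fun x _ y _ s t _ _ hst => ?_⟩
  simp only [smul_eq_mul]
  linear_combination a * hst

theorem exists_affine_le_of_convexOn (hf : ConvexOn ℝ J f) (hc : c ∈ interior J) :
    ∃ σ : ℝ, ∀ t ∈ J, f c + σ * (t - c) ≤ f t := by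
  refine ⟨derivWithin f (Ioi c) c, fun t ht => ?_⟩
  rcases lt_trichotomy t c with h | rfl | h
  · have hslope := (hf.slope_le_leftDeriv_of_mem_interior ht hc h).trans
      (hf.leftDeriv_le_rightDeriv_of_mem_interior hc)
    rw [slope_def_field, div_le_iff₀ (sub_pos.2 h)] at hslope
    linarith
  · simp
  · have hslope := hf.rightDeriv_le_slope_of_mem_interior hc ht h
    rw [slope_def_field, le_div_iff₀ (sub_pos.2 h)] at hslope
    linarith

theorem strongConvexOn_of_exists_quadratic_le {m : ℝ} (hJ : Convex ℝ J)
    (h : ∀ c ∈ J, ∃ σ : ℝ, ∀ t ∈ J, f c + σ * (t - c) + m / 2 * (t - c) ^ 2 ≤ f t) :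
    StrongConvexOn J m f := by
  refine ⟨hJ, fun x hx y hy a b ha hb hab => ?_⟩
  obtain ⟨σ, hσ⟩ := h _ (hJ hx hy ha hb hab)
  simp only [smul_eq_mul, Real.norm_eq_abs, sq_abs] at hσ ⊢
  obtain rfl : b = 1 - a := by linarith
  linear_combination a * hσ x hx + (1 - a) * hσ y hy

theorem eq_zero_of_convexOn_of_mem_Ioo {a b y : ℝ} (hg : ConvexOn ℝ (Icc a b) g) (ha : g a = 0)
    (hb : g b = 0) (hy : y ∈ Ioo a b) (hgy : 0 ≤ g y) {u : ℝ} (hu : u ∈ Icc a b) : g u = 0 := by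
  have hab : a ≤ b := hu.1.trans hu.2
  have hle : g u ≤ 0 := by
    simpa [ha, hb] using hg.le_max_of_mem_Icc (left_mem_Icc.2 hab) (right_mem_Icc.2 hab) hu
  refine hle.antisymm (not_lt.1 fun hlt => ?_)
  rcases lt_trichotomy u y with huy | rfl | hyu
  · refine (hg.lt_right_of_left_lt hu (right_mem_Icc.2 hab) ?_ (hlt.trans_le hgy)).not_ge (hb ▸ hgy)
    exact openSegment_eq_Ioo (huy.trans hy.2) ▸ ⟨huy, hy.2⟩
  · exact hgy.not_gt hlt
  · refine (hg.lt_left_of_right_lt (left_mem_Icc.2 hab) hu ?_ (hlt.trans_le hgy)).not_ge (ha ▸ hgy)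
    exact openSegment_eq_Ioo (hy.1.trans hyu) ▸ ⟨hy.1, hyu⟩

theorem exists_add_le_chord (hJ : IsOpen J) (hf : ConvexOn ℝ J f)
    (hna : ¬ ∃ α β : ℝ, ∀ x ∈ J, f x = α * x + β) (hlr : l < r) (hlrJ : Icc l r ⊆ J) :
    ∃ x z κ : ℝ, x < l ∧ r < z ∧ Icc x z ⊆ J ∧ 0 < κ ∧
      ∀ c ∈ Icc l r, f c + κ ≤ f x + slope f x z * (c - x) := by
  have hl : l ∈ J := hlrJ (left_mem_Icc.2 hlr.le)
  have hr : r ∈ J := hlrJ (right_mem_Icc.2 hlr.le)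
  obtain ⟨y, hyJ, hy⟩ : ∃ y ∈ J, f y ≠ f l + slope f l r * (y - l) := by
    by_contra! h
    exact hna ⟨slope f l r, f l - slope f l r * l, fun x hx => by linear_combination h x hx⟩
  obtain ⟨x, z, hxz, hxzJ, hsub⟩ := exists_Icc_subset_of_isOpen_of_isCompact hJ hf.1
    (toFinite {l, r, y}).isCompact (by simp) (by simp [insert_subset_iff, hl, hr, hyJ])
  obtain ⟨hlxz, hrxz, hyxz⟩ : l ∈ Ioo x z ∧ r ∈ Ioo x z ∧ y ∈ Ioo x z := by
    simpa [insert_subset_iff] using hsub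
  let g : ℝ → ℝ := fun u => f u - (f x + slope f x z * (u - x))
  have hg : ConvexOn ℝ J g :=
    (convexOn_sub_affine hf (f x - slope f x z * x) (slope f x z)).congr fun u _ => by
      simp only [g]; ring
  have hgz : g z = 0 := by
    simp only [g, slope_def_field]; field_simp [(sub_pos.2 hxz).ne']; ring
  have hneg : ∀ c ∈ Icc l r, g c < 0 := by
    intro c hc
    by_contra! hgc
    have hzero : ∀ u ∈ Ioo x z, g u = 0 := fun u hu =>
      eq_zero_of_convexOn_of_mem_Ioo (hg.subset hxzJ (convex_Icc x z)) (by simp [g]) hgz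
        ⟨hlxz.1.trans_le hc.1, hc.2.trans_lt hrxz.2⟩ hgc (Ioo_subset_Icc_self hu)
    have hslope : slope f l r = slope f x z := by
      rw [slope_def_field, div_eq_iff (sub_pos.2 hlr).ne']
      linear_combination hzero r hrxz - hzero l hlxz
    exact hy (by rw [hslope]; linear_combination hzero y hyxz - hzero l hlxz)
  obtain ⟨c₀, hc₀, hmax⟩ := isCompact_Icc.exists_isMaxOn (nonempty_Icc.2 hlr.le)
    ((hg.continuousOn hJ).mono hlrJ)
  refine ⟨x, z, -g c₀, hlxz.1, hrxz.2, hxzJ, neg_pos.2 (hneg c₀ hc₀), fun c hc => ?_⟩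
  linarith [isMaxOn_iff.1 hmax c hc, show g c = f c - (f x + slope f x z * (c - x)) from rfl]

theorem cubic_le_of_convexOn {σ : ℝ} (hf : ConvexOn ℝ (Icc l r) f) (hc : c ∈ Icc l r)
    (hσ : ∀ t ∈ Icc l r, f c + σ * (t - c) ≤ f t) (hz : z ∈ Icc l r) (hpz : 0 < p * (z - c))
    (hp : |p| * (r - l) ^ 3 ≤ f z - (f c + σ * (z - c))) {u : ℝ} (hu : u ∈ Icc l r) :
    f c + σ * (u - c) + p * ((u - z) * (u - c) ^ 2) ≤ f u := by
  let h : ℝ → ℝ := fun u => f u - (f c + σ * (u - c))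
  have hconv : ConvexOn ℝ (Icc l r) h :=
    (convexOn_sub_affine hf (f c - σ * c) σ).congr fun u _ => by simp only [h]; ring
  have hh : ∀ u ∈ Icc l r, 0 ≤ h u := fun u hu => sub_nonneg.2 (hσ u hu)
  suffices p * ((u - z) * (u - c) ^ 2) ≤ h u by
    linarith [show h u = f u - (f c + σ * (u - c)) from rfl]
  rcases le_or_gt (p * (u - z)) 0 with hpu | hpu
  · nlinarith [hh u hu, sq_nonneg (u - c)]
  have hzu : z ∈ uIcc c u := by
    rcases lt_or_gt_of_ne (left_ne_zero_of_mul hpz.ne') with hp0 | hp0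
    · exact mem_uIcc.2 (Or.inr ⟨by nlinarith, by nlinarith⟩)
    · exact mem_uIcc.2 (Or.inl ⟨by nlinarith, by nlinarith⟩)
  have hmono : h z ≤ h u := by
    have hmax : h z ≤ max (h c) (h u) :=
      hconv.le_max_of_mem_segment hc hu (segment_eq_uIcc c u ▸ hzu)
    simpa [show h c = 0 by simp [h], hh u hu] using hmax
  have hdist : ∀ {a b : ℝ}, a ∈ Icc l r → b ∈ Icc l r → |a - b| ≤ r - l := fun ha hb =>
    abs_sub_le_iff.2 ⟨by linarith [ha.2, hb.1], by linarith [ha.1, hb.2]⟩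
  calc p * ((u - z) * (u - c) ^ 2) ≤ |p| * (|u - z| * |u - c| ^ 2) := by
        rw [← abs_pow, ← abs_mul, ← abs_mul]; exact le_abs_self _
    _ ≤ |p| * ((r - l) * (r - l) ^ 2) := by
        gcongr
        exacts [sub_nonneg.2 (hc.1.trans hc.2), hdist hu hz, hdist hu hc]
    _ = |p| * (r - l) ^ 3 := by ring
    _ ≤ h z := hp
    _ ≤ h u := hmono

end Scalar

/-! ### Rank-one perturbations of scalars -/

section Hilbert

variable {H : Type*} [NormedAddCommGroup H] [InnerProductSpace ℂ H] [CompleteSpace H]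
  {A : H →L[ℂ] H} {l r : ℝ} {f : ℝ → ℝ} {J : Set ℝ}

section StarProjection

variable {P : H →L[ℂ] H}

theorem algebraMap_add_smul_eq_cfc (hA : IsSelfAdjoint A) (c d : ℝ) :
    algebraMap ℝ (H →L[ℂ] H) c + d • A = cfc (fun x => c + d * x) A := by
  rw [cfc_const_add c (fun x => d * x) A, cfc_const_mul_id d A]

theorem algebraMap_add_smul_mem_Icc (hP : IsStarProjection P) {c t : ℝ} (hc : c ∈ Icc l r)
    (ht : t ∈ Icc l r) : algebraMap ℝ (H →L[ℂ] H) c + (t - c) • P ∈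
      Icc (algebraMap ℝ (H →L[ℂ] H) l) (algebraMap ℝ (H →L[ℂ] H) r) := by
  rw [mem_Icc_algebraMap_iff, algebraMap_add_smul_eq_cfc hP.isSelfAdjoint,
    cfc_map_spectrum _ P hP.isSelfAdjoint]
  refine ⟨cfc_predicate _ P, ?_⟩
  rintro _ ⟨x, hx, rfl⟩
  rcases hP.isIdempotentElem.spectrum_subset ℝ hx with rfl | rfl <;> simpa

theorem cfc_algebraMap_add_smul (hP : IsStarProjection P) (f : ℝ → ℝ) (c t : ℝ) :
    cfc f (algebraMap ℝ (H →L[ℂ] H) c + (t - c) • P) =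
      algebraMap ℝ (H →L[ℂ] H) (f c) + (f t - f c) • P := by
  have hspec : spectrum ℝ P ⊆ {0, 1} := hP.isIdempotentElem.spectrum_subset ℝ
  have hfin : ((fun x => c + (t - c) * x) '' spectrum ℝ P).Finite := (toFinite _).subset
    (image_mono hspec)
  rw [algebraMap_add_smul_eq_cfc hP.isSelfAdjoint, algebraMap_add_smul_eq_cfc hP.isSelfAdjoint,
    ← cfc_comp' f _ P (hfin.continuousOn f) (by fun_prop) hP.isSelfAdjoint]
  refine cfc_congr fun x hx => ?_
  rcases hspec hx with rfl | rfl <;> simp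

end StarProjection

theorem cfc_cubic (hA : IsSelfAdjoint A) (a σ p c z : ℝ) :
    cfc (fun u => a + σ * (u - c) + p * ((u - z) * (u - c) ^ 2)) A =
      algebraMap ℝ (H →L[ℂ] H) a + σ • (A - algebraMap ℝ (H →L[ℂ] H) c) +
        p • ((A - algebraMap ℝ (H →L[ℂ] H) c) * (A - algebraMap ℝ (H →L[ℂ] H) z) *
          (A - algebraMap ℝ (H →L[ℂ] H) c)) := by
  open Polynomial in
  have := cfc_polynomial (C a + C σ * (X - C c) + C p * ((X - C c) * (X - C z) * (X - C c))) A hA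
  simp only [eval_add, eval_mul, eval_sub, eval_X, eval_C, map_add, map_mul, map_sub, aeval_X,
    aeval_C, ← Algebra.smul_def] at this
  rw [← this]
  congr! 2 with u
  ring

omit [CompleteSpace H] in
theorem inner_mul_inner_symm (x y : H) :
    inner ℂ x y * inner ℂ y x = ((‖inner ℂ y x‖ ^ 2 : ℝ) : ℂ) := by
  rw [← inner_conj_symm, Complex.conj_mul', Complex.ofReal_pow]

omit [CompleteSpace H] in
theorem inner_rankOne_self_apply (y v : H) :
    inner ℂ v (rankOne ℂ y y v) = ((‖inner ℂ y v‖ ^ 2 : ℝ) : ℂ) := by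
  rw [rankOne_apply, inner_smul_right, mul_comm, inner_mul_inner_symm]

omit [CompleteSpace H] in
theorem inner_cubic_rankOne_apply {e v y : H} (a b d : ℝ) (hy : ‖y‖ = 1) (hev : inner ℂ e v = 0) :
    let N : H →L[ℂ] H := a • rankOne ℂ e e + b • rankOne ℂ y y
    inner ℂ v ((N * (N + d • 1) * N) v) =
      ↑(b ^ 2 * ‖inner ℂ y v‖ ^ 2 * (a * ‖inner ℂ y e‖ ^ 2 + b + d) : ℝ) := by
  intro N
  have hNv : N v = ((b : ℂ) * inner ℂ y v) • y := by
    simp [N, hev, mul_smul, ← Complex.coe_smul]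
  have hvN : ∀ x, inner ℂ v (N x) = b * inner ℂ v y * inner ℂ y x := fun x => by
    simp [N, inner_eq_zero_symm.1 hev, ← Complex.coe_smul]
    ring
  have hyNy : inner ℂ y (N y) = ((a * ‖inner ℂ y e‖ ^ 2 + b : ℝ) : ℂ) := by
    rw [add_apply, inner_add_right, smul_apply, smul_apply, inner_smul_right_eq_smul,
      inner_smul_right_eq_smul, inner_rankOne_self_apply, inner_rankOne_self_apply,
      inner_self_eq_norm_sq_to_K, hy, norm_inner_symm e y]
    simp
  calc inner ℂ v ((N * (N + d • 1) * N) v)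
      = b * b * (inner ℂ v y * inner ℂ y v) * (inner ℂ y (N y) + d) := by
        simp [hNv, hvN, ← Complex.coe_smul, hy]
        ring
    _ = _ := by rw [hyNy, inner_mul_inner_symm]; push_cast; ring

namespace OperatorConvexOn

variable {e v y : H} {c t w z p σ s : ℝ}

theorem cubic_le_of_rankOne (hf : OperatorConvexOn H (Icc l r) f) (hcont : ContinuousOn f (Icc l r))
    (he : ‖e‖ = 1) (hy : ‖y‖ = 1) (hv : ‖v‖ = 1) (hev : inner ℂ e v = 0)
    (hc : c ∈ Icc l r) (ht : t ∈ Icc l r) (hw : w ∈ Icc l r)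
    (hcubic : ∀ u ∈ Icc l r, f c + σ * (u - c) + p * ((u - z) * (u - c) ^ 2) ≤ f u)
    (hs : s ∈ Icc (0 : ℝ) 1) :
    (1 - s) * ‖inner ℂ y v‖ ^ 2 * (σ * (t - c) + p * (1 - s) * (t - c) ^ 2 *
        (s * (w - c) * ‖inner ℂ y e‖ ^ 2 + (1 - s) * (t - c) + (c - z))) ≤
      (1 - s) * ‖inner ℂ y v‖ ^ 2 * (f t - f c) := by
  have hE := isStarProjection_rankOne_self (𝕜 := ℂ) he
  have hY := isStarProjection_rankOne_self (𝕜 := ℂ) hy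
  have hA := algebraMap_add_smul_mem_Icc hE hc hw
  have hB := algebraMap_add_smul_mem_Icc hY hc ht
  obtain ⟨hMsa, hM⟩ := mem_Icc_algebraMap_iff.1
    (convex_Icc _ _ hA hB hs.1 (sub_nonneg.2 hs.2) (add_sub_cancel s 1))
  have hconv := hf s hs _ _ (mem_Icc_algebraMap_iff.1 hA).1 (mem_Icc_algebraMap_iff.1 hB).1
    (mem_Icc_algebraMap_iff.1 hA).2 (mem_Icc_algebraMap_iff.1 hB).2
  have hle := (cfc_mono (fun u hu => hcubic u (hM hu)) (by fun_prop) (hcont.mono hM)).trans hconv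
  have hsub : ∀ x : ℝ, s • (algebraMap ℝ (H →L[ℂ] H) c + (w - c) • rankOne ℂ e e) +
      (1 - s) • (algebraMap ℝ (H →L[ℂ] H) c + (t - c) • rankOne ℂ y y) -
      algebraMap ℝ (H →L[ℂ] H) x = ((s * (w - c)) • rankOne ℂ e e +
        ((1 - s) * (t - c)) • rankOne ℂ y y) + (c - x) • 1 := fun x => by
    rw [Algebra.algebraMap_eq_smul_one, Algebra.algebraMap_eq_smul_one]
    module
  rw [cfc_cubic hMsa, cfc_algebraMap_add_smul hE, cfc_algebraMap_add_smul hY, hsub, hsub, sub_self,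
    zero_smul, add_zero] at hle
  have hform := re_inner_apply_le_of_le hle v
  simp only [Algebra.algebraMap_eq_smul_one, add_apply, smul_apply, one_apply_eq_self,
    inner_add_right, inner_smul_right_eq_smul, inner_cubic_rankOne_apply _ _ _ hy hev,
    inner_rankOne_self_apply, inner_self_eq_norm_sq_to_K, hv, hev, Complex.add_re, Complex.smul_re,
    Complex.ofReal_re, norm_zero, map_one, one_pow, Complex.one_re, smul_eq_mul] at hform
  linear_combination hform

end OperatorConvexOn

omit [CompleteSpace H] in
theorem exists_norm_eq_one_of_inner_eq_zero {e v : H} (he : ‖e‖ = 1) (hv : ‖v‖ = 1)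
    (hev : inner ℂ e v = 0) {k : ℝ} (hk : k ∈ Icc (0 : ℝ) 1) :
    ∃ y : H, ‖y‖ = 1 ∧ ‖inner ℂ y e‖ ^ 2 = k ∧ ‖inner ℂ y v‖ ^ 2 = 1 - k := by
  have hk' : 0 ≤ 1 - k := sub_nonneg.2 hk.2
  refine ⟨(√k : ℂ) • e + (√(1 - k) : ℂ) • v, ?_, ?_, ?_⟩
  · rw [← sq_eq_sq₀ (norm_nonneg _) zero_le_one, norm_add_sq (𝕜 := ℂ),
      inner_smul_left, inner_smul_right, hev]
    simp [norm_smul, he, hv, Real.sq_sqrt hk.1, Real.sq_sqrt hk']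
  · simp [inner_eq_zero_symm.1 hev, he, Real.sq_sqrt hk.1]
  · simp [hev, hv, Real.sq_sqrt hk']

theorem exists_abs_eq_one_le_mul_sub {c z δ : ℝ} (hz : z ∈ Icc (l + δ) (r - δ)) (hδ : 0 ≤ δ)
    (hzc : z ≠ c) :
    ∃ ε w : ℝ, w ∈ Icc l r ∧ |ε| = 1 ∧ δ ≤ ε * (w - z) ∧ 0 < ε * (z - c) := by
  have hlr : l ≤ r := by linarith [hz.1, hz.2]
  rcases lt_or_gt_of_ne hzc with hzc | hzc
  · exact ⟨-1, l, left_mem_Icc.2 hlr, by simp, by linarith [hz.1], by linarith⟩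
  · exact ⟨1, r, right_mem_Icc.2 hlr, by simp, by linarith [hz.2], by linarith⟩

namespace OperatorConvexOn

variable {c t w z p σ s : ℝ}

theorem cubic_growth {e v : H} (hf : OperatorConvexOn H (Icc l r) f)
    (hcont : ContinuousOn f (Icc l r)) (he : ‖e‖ = 1) (hv : ‖v‖ = 1) (hev : inner ℂ e v = 0)
    (hc : c ∈ Icc l r) (ht : t ∈ Icc l r) (hw : w ∈ Icc l r)
    (hcubic : ∀ u ∈ Icc l r, f c + σ * (u - c) + p * ((u - z) * (u - c) ^ 2) ≤ f u)
    (hs : s ∈ Ico (0 : ℝ) 1) :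
    f c + σ * (t - c) + p * (1 - s) * (s * w + (1 - s) * t - z) * (t - c) ^ 2 ≤ f t := by
  let F : ℝ → ℝ := fun k => f c + σ * (t - c) + p * (1 - s) * (t - c) ^ 2 *
    (s * (w - c) * k + (1 - s) * (t - c) + (c - z))
  have hF : ∀ k ∈ Ico (0 : ℝ) 1, F k ≤ f t := by
    intro k hk
    obtain ⟨y, hy, hye, hyv⟩ := exists_norm_eq_one_of_inner_eq_zero he hv hev ⟨hk.1, hk.2.le⟩
    have h := hf.cubic_le_of_rankOne hcont he hy hv hev hc ht hw hcubic ⟨hs.1, hs.2.le⟩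
    rw [hye, hyv] at h
    have := le_of_mul_le_mul_left h (mul_pos (sub_pos.2 hs.2) (sub_pos.2 hk.2))
    simp only [F]
    linarith
  have hF1 : F 1 ≤ f t := ContinuousWithinAt.closure_le
    (by rw [closure_Ico zero_ne_one]; exact right_mem_Icc.2 zero_le_one)
    (by fun_prop) (by fun_prop) hF
  linear_combination hF1

theorem quadratic_growth {e v : H} {δ κ : ℝ} (hf : OperatorConvexOn H (Icc l r) f)
    (hcont : ContinuousOn f (Icc l r)) (hconv : ConvexOn ℝ (Icc l r) f) (he : ‖e‖ = 1)
    (hv : ‖v‖ = 1) (hev : inner ℂ e v = 0) (hc : c ∈ Icc l r)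
    (hσ : ∀ t ∈ Icc l r, f c + σ * (t - c) ≤ f t) (hz : z ∈ Icc (l + δ) (r - δ)) (hδ : 0 < δ)
    (hκ : 0 < κ) (hfz : κ ≤ f z - (f c + σ * (z - c))) (ht : t ∈ Icc l r) :
    f c + σ * (t - c) + κ * δ ^ 2 / (4 * (r - l) ^ 4) * (t - c) ^ 2 ≤ f t := by
  have hL : 0 < r - l := by linarith [hz.1, hz.2]
  have hzlr : z ∈ Icc l r := ⟨by linarith [hz.1], by linarith [hz.2]⟩
  have hzc : z ≠ c := by rintro rfl; linarith [sub_self z]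
  obtain ⟨ε, w, hw, hε, hzw, hzε⟩ := exists_abs_eq_one_le_mul_sub hz hδ.le hzc
  have hdist : ∀ x ∈ Icc l r, ε * (w - x) ≤ r - l := fun x hx => by
    refine (le_abs_self _).trans ?_
    rw [abs_mul, hε, one_mul]
    exact abs_sub_le_iff.2 ⟨by linarith [hw.2, hx.1], by linarith [hw.1, hx.2]⟩
  -- `p` has the sign of `z - c`, and `s` is so close to `1` that `s w + (1 - s) t` still lies at
  -- distance at least `δ / 2` beyond `z`, for every `t`.
  let p := κ / (r - l) ^ 3 * ε
  let s := 1 - δ / (2 * (r - l))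
  have hs : s ∈ Ico (0 : ℝ) 1 := by
    refine ⟨sub_nonneg.2 ((div_le_one (by positivity)).2 ?_), sub_lt_self 1 (by positivity)⟩
    linarith [hdist z hzlr]
  have hcubic : ∀ u ∈ Icc l r, f c + σ * (u - c) + p * ((u - z) * (u - c) ^ 2) ≤ f u := by
    refine fun u hu => cubic_le_of_convexOn hconv hc hσ hzlr ?_ ?_ hu
    · simp only [p, mul_assoc]; positivity
    · rwa [abs_mul, hε, mul_one, abs_of_pos (by positivity), div_mul_cancel₀ _ (by positivity)]
  have hside : δ / 2 ≤ ε * (s * w + (1 - s) * t - z) := by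
    have h : δ / (2 * (r - l)) * (ε * (w - t)) ≤ δ / 2 := by
      calc _ ≤ δ / (2 * (r - l)) * (r - l) := by gcongr; exact hdist t ht
        _ = δ / 2 := by field_simp
    simp only [s]
    linarith
  have hcoef : κ * δ ^ 2 / (4 * (r - l) ^ 4) ≤ p * (1 - s) * (s * w + (1 - s) * t - z) := by
    calc κ * δ ^ 2 / (4 * (r - l) ^ 4)
        = κ / (r - l) ^ 3 * (δ / (2 * (r - l))) * (δ / 2) := by field_simp; norm_num
      _ ≤ κ / (r - l) ^ 3 * (δ / (2 * (r - l))) * (ε * (s * w + (1 - s) * t - z)) := by gcongr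
      _ = _ := by simp only [p, s]; ring
  nlinarith [hf.cubic_growth hcont he hv hev hc ht hw hcubic hs, sq_nonneg (t - c)]

theorem exists_strongConvexOn {e v : H} (hf : OperatorConvexOn H J f) (hJ : IsOpen J)
    (hJc : Convex ℝ J) (hna : ¬ ∃ α β : ℝ, ∀ x ∈ J, f x = α * x + β) (he : ‖e‖ = 1)
    (hv : ‖v‖ = 1) (hev : inner ℂ e v = 0) (hlr : l < r) (hlrJ : Icc l r ⊆ J) :
    ∃ m : ℝ, 0 < m ∧ StrongConvexOn (Icc l r) m f := by
  have : Nontrivial H := ⟨e, 0, fun h => by simp [h] at he⟩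
  have hconv := hf.convexOn hJc
  obtain ⟨x, z, κ, hxl, hrz, hxzJ, hκ, hchord⟩ := exists_add_le_chord hJ hconv hna hlr hlrJ
  have hxz : x < z := hxl.trans (hlr.trans hrz)
  obtain ⟨a, b, hab, habJ, hsub⟩ := exists_Icc_subset_of_isOpen_of_isCompact hJ hJc
    isCompact_Icc (nonempty_Icc.2 hxz.le) hxzJ
  obtain ⟨hax, hzb⟩ : a < x ∧ z < b :=
    ⟨(hsub (left_mem_Icc.2 hxz.le)).1, (hsub (right_mem_Icc.2 hxz.le)).2⟩
  have hlrab : Icc l r ⊆ Icc a b := Icc_subset_Icc (hax.trans hxl).le (hrz.trans hzb).le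
  let δ := min (x - a) (b - z)
  have hδ : 0 < δ := lt_min (sub_pos.2 hax) (sub_pos.2 hzb)
  have hδx : δ ≤ x - a := min_le_left _ _
  have hδz : δ ≤ b - z := min_le_right _ _
  refine ⟨2 * (κ * δ ^ 2 / (4 * (b - a) ^ 4)), ?_, strongConvexOn_of_exists_quadratic_le
    (convex_Icc l r) fun c hc => ?_⟩
  · have := sub_pos.2 hab; positivity
  obtain ⟨σ, hσ⟩ := exists_affine_le_of_convexOn hconv
    (hJ.interior_eq.symm ▸ hlrJ hc : c ∈ interior J)
  -- A convex combination of the gaps of `f` over its tangent at `x` and `z` is at least `κ`.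
  obtain ⟨y, hy, hfy⟩ : ∃ y ∈ Icc (a + δ) (b - δ), κ ≤ f y - (f c + σ * (y - c)) := by
    by_contra! h
    have hx := h x ⟨by linarith, by linarith⟩
    have hz := h z ⟨by linarith, by linarith⟩
    have hchord := hchord c hc
    rw [slope_def_field, ← sub_le_iff_le_add', div_mul_eq_mul_div,
      le_div_iff₀ (sub_pos.2 hxz)] at hchord
    nlinarith [hc.1, hc.2]
  refine ⟨σ, fun t ht => ?_⟩
  rw [mul_div_cancel_left₀ _ two_ne_zero]
  exact (hf.mono habJ).quadratic_growth ((hconv.continuousOn hJ).mono habJ)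
    (hconv.subset habJ (convex_Icc a b)) he hv hev (hlrab hc) (fun t ht => hσ t (habJ ht)) hy hδ hκ
    hfy (hlrab ht)

end OperatorConvexOn

end Hilbert

/-! ### Bordered operators -/

section StrongConvexOn

variable {f : ℝ → ℝ} {s : Set ℝ} {m t ε : ℝ}

theorem continuousOn_interior_of_strongConvexOn (hf : StrongConvexOn s m f) :
    ContinuousOn f (interior s) := by
  have h := (strongConvexOn_iff_convex.1 hf).continuousOn_interior.add
    (by fun_prop : ContinuousOn (fun x : ℝ => m / 2 * ‖x‖ ^ 2) (interior s))
  exact h.congr fun x _ => by simp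

theorem exists_sq_mul_le_of_convexOn (hf : ConvexOn ℝ s f) (ht : t ∈ interior s) (hε : ε ∈ s) :
    ∃ σ : ℝ, ∀ u ∈ s, σ * ((u - t) ^ 2 * (u - ε)) ≤ (u - t) * (u - ε) * (f u - f t) := by
  obtain rfl | hεt := eq_or_ne ε t
  · obtain ⟨σ, hσ⟩ := exists_affine_le_of_convexOn hf ht
    exact ⟨σ, fun u hu => by nlinarith [hσ u hu, sq_nonneg (u - ε)]⟩
  refine ⟨slope f t ε, fun u hu => ?_⟩
  obtain rfl | hut := eq_or_ne u t
  · simp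
  have hmono := hf.slope_mono (interior_subset ht)
  have hslope : 0 ≤ (u - ε) * (slope f t u - slope f t ε) := by
    rcases le_total u ε with h | h
    · exact mul_nonneg_of_nonpos_of_nonpos (sub_nonpos.2 h)
        (sub_nonpos.2 (hmono ⟨hu, hut⟩ ⟨hε, hεt⟩ h))
    · exact mul_nonneg (sub_nonneg.2 h) (sub_nonneg.2 (hmono ⟨hε, hεt⟩ ⟨hu, hut⟩ h))
  have hu : f u - f t = slope f t u * (u - t) := by
    rw [slope_def_field, div_mul_cancel₀ _ (sub_ne_zero.2 hut)]
  rw [hu]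
  linear_combination (u - t) ^ 2 * hslope

theorem exists_sq_mul_add_le_of_strongConvexOn (hf : StrongConvexOn s m f) (ht : t ∈ interior s)
    (hε : ε ∈ s) : ∃ σ : ℝ, ∀ u ∈ s,
      σ * ((u - t) ^ 2 * (u - ε)) + m / 2 * ((u - t) * (u - ε)) ^ 2 ≤
        (u - t) * (u - ε) * (f u - f t) := by
  obtain ⟨σ, hσ⟩ := exists_sq_mul_le_of_convexOn (strongConvexOn_iff_convex.1 hf) ht hε
  refine ⟨σ + m / 2 * (t + ε), fun u hu => ?_⟩
  have h := hσ u hu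
  simp only [Real.norm_eq_abs, sq_abs] at h
  linear_combination h

end StrongConvexOn

section Hilbert

variable {H : Type*} [NormedAddCommGroup H] [InnerProductSpace ℂ H] [CompleteSpace H]
  {A S T : H →L[ℂ] H} {l r m : ℝ} {f : ℝ → ℝ} {s : Set ℝ}

theorem sub_algebraMap_eq_cfc (hA : IsSelfAdjoint A) (t : ℝ) :
    A - algebraMap ℝ (H →L[ℂ] H) t = cfc (fun u => u - t) A := by
  rw [cfc_sub _ _ A, cfc_id' ℝ A, cfc_const t A]

theorem norm_sq_le_re_inner_cfc_sub_apply (hA : IsSelfAdjoint A) (hAs : spectrum ℝ A ⊆ s)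
    (hcont : ContinuousOn f (spectrum ℝ A)) (hf : StrongConvexOn s m f) {t ε : ℝ}
    (ht : t ∈ interior s) (hε : ε ∈ s) {P Q : H →L[ℂ] H} (hP : P = A - algebraMap ℝ _ t)
    (hQ : Q = A - algebraMap ℝ _ ε) {u : H} (hu : inner ℂ (P u) (Q (P u)) = 0) :
    m / 2 * ‖Q (P u)‖ ^ 2 ≤ (inner ℂ (Q (P u)) ((cfc f A - algebraMap ℝ _ (f t)) u)).re := by
  obtain ⟨σ, hσ⟩ := exists_sq_mul_add_le_of_strongConvexOn hf ht hε
  rw [sub_algebraMap_eq_cfc hA] at hP hQ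
  have hle := cfc_mono (a := A) (fun u hu => hσ u (hAs hu)) (by fun_prop) (by fun_prop)
  have hL : cfc (fun u => σ * ((u - t) ^ 2 * (u - ε)) + m / 2 * ((u - t) * (u - ε)) ^ 2) A =
      σ • (P * Q * P) + (m / 2) • (P * Q * (Q * P)) := by
    rw [hP, hQ, ← cfc_mul _ _ A, ← cfc_mul _ _ A, ← cfc_mul _ _ A, ← cfc_mul _ _ A,
      ← cfc_const_mul _ _ A, ← cfc_const_mul _ _ A, ← cfc_add A _ _]
    exact cfc_congr fun u _ => by ring
  have hR : cfc (fun u => (u - t) * (u - ε) * (f u - f t)) A =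
      P * Q * (cfc f A - algebraMap ℝ _ (f t)) := by
    rw [cfc_mul (fun u => (u - t) * (u - ε)) _ A, cfc_mul (fun u => u - t) _ A,
      cfc_sub f _ A, cfc_const _ A, hP, hQ]
  rw [hL, hR] at hle
  have hPadj : ∀ w : H, inner ℂ u (P w) = inner ℂ (P u) w := fun w =>
    ((hP ▸ cfc_predicate _ A : IsSelfAdjoint P).isSymmetric u w).symm
  have hQadj : ∀ w : H, inner ℂ (P u) (Q w) = inner ℂ (Q (P u)) w := fun w =>
    ((hQ ▸ cfc_predicate _ A : IsSelfAdjoint Q).isSymmetric (P u) w).symm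
  have hform := re_inner_apply_le_of_le hle u
  have hcubic : inner ℂ u ((P * Q * P) u) = 0 := (hPadj _).trans hu
  have hsq : inner ℂ u ((P * Q * (Q * P)) u) = ((‖Q (P u)‖ ^ 2 : ℝ) : ℂ) := by
    rw [Complex.ofReal_pow]
    exact (hPadj _).trans ((hQadj _).trans (inner_self_eq_norm_sq_to_K _))
  have hgap : ∀ w : H →L[ℂ] H, inner ℂ u ((P * Q * w) u) = inner ℂ (Q (P u)) (w u) :=
    fun w => (hPadj _).trans (hQadj _)
  rwa [add_apply, inner_add_right, smul_apply, smul_apply, inner_smul_right_eq_smul,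
    inner_smul_right_eq_smul, hcubic, hsq, hgap, smul_zero, zero_add, Complex.smul_re,
    Complex.ofReal_re, smul_eq_mul] at hform

open Polynomial in
theorem norm_cfc_sub_aeval_le (hA : IsSelfAdjoint A) {K : Set ℝ} (hAK : spectrum ℝ A ⊆ K)
    (hf : ContinuousOn f K) {p : ℝ[X]} {η : ℝ} (hη : 0 ≤ η) (hp : ∀ u ∈ K, |p.eval u - f u| ≤ η) :
    ‖cfc f A - aeval A p‖ ≤ η := by
  rw [← cfc_polynomial p A hA, ← cfc_sub f _ A (hf.mono hAK)]
  refine norm_cfc_le hη fun u hu => ?_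
  rw [norm_sub_rev]
  exact hp u (hAK hu)

omit [CompleteSpace H] in
theorem mem_spectrum_of_apply_eq_smul {μ : ℝ} {v : H} (hv : v ≠ 0) (hAv : A v = μ • v) :
    μ ∈ spectrum ℝ A := by
  rintro ⟨R, hR⟩
  have hRv : (R : H →L[ℂ] H) v = 0 := by
    rw [hR, sub_apply, hAv, Algebra.algebraMap_eq_smul_one, smul_apply, one_apply_eq_self, sub_self]
  refine hv ?_
  calc v = (↑R⁻¹ * ↑R : H →L[ℂ] H) v := by rw [Units.inv_mul, one_apply_eq_self]
    _ = 0 := by rw [mul_apply_eq_comp, hRv, map_zero]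

open Polynomial in
omit [CompleteSpace H] in
theorem aeval_apply_of_apply_eq_smul {μ : ℝ} {v : H} (hAv : A v = μ • v) (p : ℝ[X]) :
    aeval A p v = p.eval μ • v := by
  have hpow : ∀ k, (A ^ k) v = μ ^ k • v := fun k => by
    induction k with
    | zero => simp
    | succ k ih =>
      rw [pow_succ, mul_apply_eq_comp, hAv, map_smul_of_tower, ih, smul_smul, pow_succ']
  rw [aeval_eq_sum_range, eval_eq_sum_range, Finset.sum_smul, sum_apply]
  simp only [smul_apply, hpow, smul_smul]

theorem cfc_apply_of_apply_eq_smul (hA : IsSelfAdjoint A) (hs : spectrum ℝ A ⊆ Icc l r)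
    (hf : ContinuousOn f (Icc l r)) {μ : ℝ} {v : H} (hAv : A v = μ • v) :
    cfc f A v = f μ • v := by
  obtain rfl | hv := eq_or_ne v 0
  · simp
  rw [← sub_eq_zero, ← norm_le_zero_iff]
  refine le_of_forall_pos_le_add fun η hη => ?_
  obtain ⟨p, hp⟩ := exists_polynomial_near_of_continuousOn l r f hf (η / (2 * ‖v‖)) (by positivity)
  have hμ := hp μ (hs (mem_spectrum_of_apply_eq_smul hv hAv))
  have hpA := norm_cfc_sub_aeval_le hA hs hf (by positivity) fun u hu => (hp u hu).le
  calc ‖cfc f A v - f μ • v‖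
      = ‖(cfc f A - Polynomial.aeval A p) v + (p.eval μ - f μ) • v‖ := by
        rw [sub_apply, aeval_apply_of_apply_eq_smul hAv, sub_smul, sub_add_sub_cancel]
    _ ≤ ‖cfc f A - Polynomial.aeval A p‖ * ‖v‖ + |p.eval μ - f μ| * ‖v‖ :=
        (norm_add_le _ _).trans (add_le_add (le_opNorm _ _) (norm_smul_le _ _))
    _ ≤ η / (2 * ‖v‖) * ‖v‖ + η / (2 * ‖v‖) * ‖v‖ := by gcongr
    _ = 0 + η := by field_simp [norm_ne_zero_iff.2 hv]; ring

section Border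

variable {e x : H} {ε : ℝ}

theorem norm_sq_mul_le_re_inner_of_apply_eq_smul (hS : IsSelfAdjoint S)
    (hSs : spectrum ℝ S ⊆ Icc l r) (hT : T = S + rankOne ℂ x e + rankOne ℂ e x)
    (hTs : spectrum ℝ T ⊆ Icc l r) (hs : Icc l r ⊆ interior s) (hf : StrongConvexOn s m f)
    (he : ‖e‖ = 1) (hex : inner ℂ e x = 0) (hSe : S e = ε • e) {μ : ℝ} {u : H} (hSu : S u = μ • u)
    (heu : inner ℂ e u = 0) :
    m / 2 * ‖x‖ ^ 2 * ‖inner ℂ u x‖ ^ 2 ≤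
      (inner ℂ u x * inner ℂ x ((cfc f T - cfc f S) u)).re := by
  have hcont : ContinuousOn f (Icc l r) := (continuousOn_interior_of_strongConvexOn hf).mono hs
  have hTsa : IsSelfAdjoint T := by
    rw [hT, add_assoc]
    refine hS.add ?_
    rw [isSelfAdjoint_iff, star_add, star_eq_adjoint, star_eq_adjoint, adjoint_rankOne,
      adjoint_rankOne, add_comm]
  obtain rfl | hu := eq_or_ne u 0
  · simp
  have hmem : ∀ {t : ℝ} {v : H}, v ≠ 0 → S v = t • v → t ∈ interior s := fun hv h =>
    hs (hSs (mem_spectrum_of_apply_eq_smul hv h))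
  have hP : (T - algebraMap ℝ _ μ) u = inner ℂ x u • e := by
    simp [hT, Algebra.algebraMap_eq_smul_one, hSu, heu]
  have hQ : (T - algebraMap ℝ _ ε) e = x := by
    simp [hT, Algebra.algebraMap_eq_smul_one, hSe, he, inner_eq_zero_symm.1 hex]
  have h := norm_sq_le_re_inner_cfc_sub_apply hTsa (hTs.trans (hs.trans interior_subset))
    (hcont.mono hTs) hf (hmem hu hSu)
    (interior_subset (hmem (norm_ne_zero_iff.1 (he ▸ one_ne_zero)) hSe)) rfl rfl (u := u)
    (by simp only [hP, map_smul, hQ, inner_smul_left, inner_smul_right, hex, mul_zero])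
  simp only [hP, map_smul, hQ, inner_smul_left, inner_conj_symm, norm_smul] at h
  have hSf : (cfc f T - algebraMap ℝ _ (f μ)) u = (cfc f T - cfc f S) u := by
    simp [Algebra.algebraMap_eq_smul_one, cfc_apply_of_apply_eq_smul hS hSs hcont hSu]
  rw [hSf, norm_inner_symm] at h
  linarith

theorem norm_pow_four_le_re_inner_of_finiteDimensional [FiniteDimensional ℂ H]
    (hS : IsSelfAdjoint S) (hSs : spectrum ℝ S ⊆ Icc l r)
    (hT : T = S + rankOne ℂ x e + rankOne ℂ e x)
    (hTs : spectrum ℝ T ⊆ Icc l r) (hs : Icc l r ⊆ interior s) (hf : StrongConvexOn s m f)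
    (he : ‖e‖ = 1) (hex : inner ℂ e x = 0) (hSe : S e = ε • e) :
    m / 2 * ‖x‖ ^ 4 ≤ (inner ℂ x ((cfc f T - cfc f S) x)).re := by
  let b := hS.isSymmetric.eigenvectorBasis rfl
  let u := fun i => b i - inner ℂ e (b i) • e
  have heu : ∀ i, inner ℂ e (u i) = 0 := fun i => by
    simp [u, he]
  have hux : ∀ i, inner ℂ (u i) x = inner ℂ (b i) x := fun i => by
    simp [u, hex]
  have hSu : ∀ i, S (u i) = hS.isSymmetric.eigenvalues rfl i • u i := by
    intro i
    have hSb : S (b i) = hS.isSymmetric.eigenvalues rfl i • b i :=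
      hS.isSymmetric.apply_eigenvectorBasis rfl i
    have hadj : ε • inner ℂ e (b i) = hS.isSymmetric.eigenvalues rfl i • inner ℂ e (b i) := by
      rw [← inner_smul_left_eq_smul, ← inner_smul_right_eq_smul, ← hSe, ← hSb]
      exact hS.isSymmetric e (b i)
    calc S (u i) = hS.isSymmetric.eigenvalues rfl i • b i - (ε • inner ℂ e (b i)) • e := by
          simp only [u, map_sub, map_smul, hSb, hSe]
          rw [smul_comm, smul_assoc]
      _ = hS.isSymmetric.eigenvalues rfl i • u i := by rw [hadj, smul_assoc, ← smul_sub]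
  have hx : ∑ i, inner ℂ (u i) x • u i = x := by
    simp only [hux]
    simp only [u, smul_sub, Finset.sum_sub_distrib, b.sum_repr', smul_smul, ← Finset.sum_smul,
      mul_comm (inner ℂ (b _) x), b.sum_inner_mul_inner, hex, zero_smul, sub_zero]
  calc m / 2 * ‖x‖ ^ 4 = ∑ i, m / 2 * ‖x‖ ^ 2 * ‖inner ℂ (u i) x‖ ^ 2 := by
        simp only [hux]
        rw [← Finset.mul_sum, b.sum_sq_norm_inner_right]
        ring
    _ ≤ ∑ i, (inner ℂ (u i) x * inner ℂ x ((cfc f T - cfc f S) (u i))).re :=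
        Finset.sum_le_sum fun i _ =>
          norm_sq_mul_le_re_inner_of_apply_eq_smul hS hSs hT hTs hs hf he hex hSe (hSu i) (heu i)
    _ = (inner ℂ x ((cfc f T - cfc f S) (∑ i, inner ℂ (u i) x • u i))).re := by
        simp only [map_sum, map_smul, inner_sum, inner_smul_right, Complex.re_sum]
    _ = _ := by rw [hx]

end Border

section Compression

variable {E : Type*} [NormedAddCommGroup E] [InnerProductSpace ℂ E] [CompleteSpace E]

/-- The compression `V† A V` of the operator `A` on `H` to the Hilbert space `E`, regarded as a
subspace of `H` through the isometry `V`. -/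
noncomputable def compression (V : E →ₗᵢ[ℂ] H) (A : H →L[ℂ] H) : E →L[ℂ] E :=
  adjoint V.toContinuousLinearMap ∘L A ∘L V.toContinuousLinearMap

variable {V : E →ₗᵢ[ℂ] H} {p : Polynomial ℝ} {η : ℝ}

theorem adjoint_toContinuousLinearMap_apply_self (V : E →ₗᵢ[ℂ] H) (y : E) :
    adjoint V.toContinuousLinearMap (V y) = y :=
  DFunLike.congr_fun ((norm_map_iff_adjoint_comp_self V.toContinuousLinearMap).1 V.norm_map) y

theorem inner_compression_apply (V : E →ₗᵢ[ℂ] H) (A : H →L[ℂ] H) (x y : E) :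
    inner ℂ x (compression V A y) = inner ℂ (V x) (A (V y)) := by
  rw [compression, comp_apply, adjoint_inner_right]
  rfl

theorem map_compression_apply {x : E} (hx : A (V x) ∈ range V) :
    V (compression V A x) = A (V x) := by
  obtain ⟨y, hy⟩ := hx
  calc V (compression V A x) = V (adjoint V.toContinuousLinearMap (A (V x))) := rfl
    _ = A (V x) := by rw [← hy, adjoint_toContinuousLinearMap_apply_self]

theorem compression_mem_Icc
    (hA : A ∈ Icc (algebraMap ℝ (H →L[ℂ] H) l) (algebraMap ℝ (H →L[ℂ] H) r)) :
    compression V A ∈ Icc (algebraMap ℝ (E →L[ℂ] E) l) (algebraMap ℝ (E →L[ℂ] E) r) := by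
  have hscalar : ∀ t : ℝ, compression V (algebraMap ℝ _ t) = algebraMap ℝ (E →L[ℂ] E) t :=
    fun t => by
      ext x
      simp [compression, Algebra.algebraMap_eq_smul_one, adjoint_toContinuousLinearMap_apply_self]
  have hmono : ∀ {B C : H →L[ℂ] H}, B ≤ C → compression V B ≤ compression V C := fun h => by
    rw [le_def]
    simpa [compression, sub_comp, comp_sub] using h.adjoint_conj V.toContinuousLinearMap
  exact ⟨hscalar l ▸ hmono hA.1, hscalar r ▸ hmono hA.2⟩

theorem map_aeval_compression_apply {x : E} (hx : ∀ k ≤ p.natDegree, (A ^ k) (V x) ∈ range V) :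
    V (Polynomial.aeval (compression V A) p x) = Polynomial.aeval A p (V x) := by
  have hpow : ∀ k ≤ p.natDegree, V ((compression V A ^ k) x) = (A ^ k) (V x) := fun k hk => by
    induction k with
    | zero => rfl
    | succ k ih =>
      have hk' := hx _ hk
      have ih := ih (Nat.le_of_succ_le hk)
      rw [pow_succ', mul_apply_eq_comp, ← ih] at hk'
      rw [pow_succ', mul_apply_eq_comp, map_compression_apply hk', ih, pow_succ', mul_apply_eq_comp]
  rw [Polynomial.aeval_eq_sum_range, Polynomial.aeval_eq_sum_range, sum_apply, sum_apply, map_sum]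
  refine Finset.sum_congr rfl fun k hk => ?_
  rw [smul_apply, smul_apply, ← hpow k (Nat.lt_succ_iff.1 (Finset.mem_range.1 hk))]
  exact V.toLinearMap.map_smul_of_tower _ _

theorem abs_re_inner_cfc_sub_aeval_le (hη : 0 ≤ η)
    (hA : A ∈ Icc (algebraMap ℝ (H →L[ℂ] H) l) (algebraMap ℝ (H →L[ℂ] H) r))
    (hf : ContinuousOn f (Icc l r)) (hp : ∀ u ∈ Icc l r, |p.eval u - f u| ≤ η) (x : H) :
    |(inner ℂ x (cfc f A x)).re - (inner ℂ x (Polynomial.aeval A p x)).re| ≤ η * ‖x‖ ^ 2 := by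
  obtain ⟨hAsa, hAs⟩ := mem_Icc_algebraMap_iff.1 hA
  rw [← Complex.sub_re, ← inner_sub_right, ← sub_apply]
  calc |(inner ℂ x ((cfc f A - Polynomial.aeval A p) x)).re|
      ≤ ‖x‖ * (‖cfc f A - Polynomial.aeval A p‖ * ‖x‖) :=
        (Complex.abs_re_le_norm _).trans ((norm_inner_le_norm _ _).trans
          (mul_le_mul_of_nonneg_left (le_opNorm _ _) (norm_nonneg x)))
    _ ≤ ‖x‖ * (η * ‖x‖) := by
        gcongr
        exact norm_cfc_sub_aeval_le hAsa hAs hf hη hp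
    _ = η * ‖x‖ ^ 2 := by ring

theorem abs_re_inner_cfc_compression_sub_le (hη : 0 ≤ η)
    (hA : A ∈ Icc (algebraMap ℝ (H →L[ℂ] H) l) (algebraMap ℝ (H →L[ℂ] H) r))
    (hf : ContinuousOn f (Icc l r)) (hp : ∀ u ∈ Icc l r, |p.eval u - f u| ≤ η) {x : E}
    (hx : ∀ k ≤ p.natDegree, (A ^ k) (V x) ∈ range V) :
    |(inner ℂ x (cfc f (compression V A) x)).re - (inner ℂ (V x) (cfc f A (V x))).re| ≤
      2 * η * ‖x‖ ^ 2 := by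
  have hE := abs_re_inner_cfc_sub_aeval_le hη (compression_mem_Icc (V := V) hA) hf hp x
  have hH := abs_re_inner_cfc_sub_aeval_le hη hA hf hp (V x)
  rw [← V.inner_map_map x (Polynomial.aeval (compression V A) p x),
    map_aeval_compression_apply hx] at hE
  rw [abs_sub_comm, V.norm_map] at hH
  linarith [(abs_sub_le _ _ _).trans (add_le_add hE hH)]

theorem re_inner_cfc_compression_apply_self
    (hA : A ∈ Icc (algebraMap ℝ (H →L[ℂ] H) l) (algebraMap ℝ (H →L[ℂ] H) r))
    (hf : ContinuousOn f (Icc l r)) (hAV : ∀ y, A (V y) ∈ range V) (x : E) :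
    (inner ℂ x (cfc f (compression V A) x)).re = (inner ℂ (V x) (cfc f A (V x))).re := by
  have hpow : ∀ k, (A ^ k) (V x) ∈ range V := fun k => by
    induction k with
    | zero => exact ⟨x, rfl⟩
    | succ k ih =>
      obtain ⟨y, hy⟩ := ih
      rw [pow_succ', mul_apply_eq_comp, ← hy]
      exact hAV y
  refine eq_of_forall_dist_le fun δ hδ => ?_
  have hη : 0 < δ / (2 * (‖x‖ ^ 2 + 1)) := by positivity
  obtain ⟨p, hp⟩ := exists_polynomial_near_of_continuousOn l r f hf _ hη
  refine (abs_re_inner_cfc_compression_sub_le hη.le hA hf (fun u hu => (hp u hu).le)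
    fun k _ => hpow k).trans ?_
  rw [← mul_div_assoc, mul_div_mul_left _ _ two_ne_zero, div_mul_eq_mul_div,
    div_le_iff₀ (by positivity)]
  gcongr
  linarith

variable {e x : E} {ε : ℝ}

theorem norm_pow_four_le_re_inner_add_of_isometry [FiniteDimensional ℂ E] (hη : 0 ≤ η)
    (hS : S ∈ Icc (algebraMap ℝ (H →L[ℂ] H) l) (algebraMap ℝ (H →L[ℂ] H) r))
    (hT : T ∈ Icc (algebraMap ℝ (H →L[ℂ] H) l) (algebraMap ℝ (H →L[ℂ] H) r))
    (hTS : T = S + rankOne ℂ (V x) (V e) + rankOne ℂ (V e) (V x)) (hs : Icc l r ⊆ interior s)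
    (hf : StrongConvexOn s m f) (he : ‖e‖ = 1) (hex : inner ℂ e x = 0) (hSe : S (V e) = ε • V e)
    (hp : ∀ u ∈ Icc l r, |p.eval u - f u| ≤ η)
    (hxS : ∀ k ≤ p.natDegree, (S ^ k) (V x) ∈ range V)
    (hxT : ∀ k ≤ p.natDegree, (T ^ k) (V x) ∈ range V) :
    m / 2 * ‖V x‖ ^ 4 ≤
      (inner ℂ (V x) ((cfc f T - cfc f S) (V x))).re + 4 * η * ‖V x‖ ^ 2 := by
  have hcont : ContinuousOn f (Icc l r) := (continuousOn_interior_of_strongConvexOn hf).mono hs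
  obtain ⟨hSsa, hSs⟩ := mem_Icc_algebraMap_iff.1 (compression_mem_Icc (V := V) hS)
  obtain ⟨-, hTs⟩ := mem_Icc_algebraMap_iff.1 (compression_mem_Icc (V := V) hT)
  have hTS' : compression V T = compression V S + rankOne ℂ x e + rankOne ℂ e x := by
    ext y
    simp [compression, hTS, adjoint_toContinuousLinearMap_apply_self]
  have hVe : V (ε • e) = S (V e) := (V.toLinearMap.map_smul_of_tower ε e).trans hSe.symm
  have hSe' : compression V S e = ε • e :=
    V.injective ((map_compression_apply ⟨_, hVe⟩).trans hVe.symm)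
  have hE := norm_pow_four_le_re_inner_of_finiteDimensional hSsa hSs hTS' hTs hs hf he hex hSe'
  have hS' := abs_le.1 (abs_re_inner_cfc_compression_sub_le hη hS hcont hp hxS)
  have hT' := abs_le.1 (abs_re_inner_cfc_compression_sub_le hη hT hcont hp hxT)
  rw [sub_apply, inner_sub_right, Complex.sub_re] at hE ⊢
  rw [V.norm_map]
  linarith [hS'.1, hT'.2]

end Compression

theorem norm_pow_four_le_re_inner_cfc_sub {e x : H} {ε : ℝ}
    (hS : S ∈ Icc (algebraMap ℝ (H →L[ℂ] H) l) (algebraMap ℝ (H →L[ℂ] H) r))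
    (hT : T ∈ Icc (algebraMap ℝ (H →L[ℂ] H) l) (algebraMap ℝ (H →L[ℂ] H) r))
    (hTS : T = S + rankOne ℂ x e + rankOne ℂ e x) (hs : Icc l r ⊆ interior s)
    (hf : StrongConvexOn s m f) (he : ‖e‖ = 1) (hex : inner ℂ e x = 0) (hSe : S e = ε • e) :
    m / 2 * ‖x‖ ^ 4 ≤ (inner ℂ x ((cfc f T - cfc f S) x)).re := by
  have hcont : ContinuousOn f (Icc l r) := (continuousOn_interior_of_strongConvexOn hf).mono hs
  have happrox : ∀ η > 0, m / 2 * ‖x‖ ^ 4 ≤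
      (inner ℂ x ((cfc f T - cfc f S) x)).re + 4 * η * ‖x‖ ^ 2 := by
    intro η hη
    obtain ⟨p, hp⟩ := exists_polynomial_near_of_continuousOn l r f hcont η hη
    -- The Krylov space of `S` and `T` at `x` up to the degree of `p`.
    obtain ⟨F, hF, heF, hSF, hTF⟩ : ∃ F : Submodule ℂ H, FiniteDimensional ℂ F ∧ e ∈ F ∧
        (∀ k ≤ p.natDegree, (S ^ k) x ∈ F) ∧ ∀ k ≤ p.natDegree, (T ^ k) x ∈ F :=
      ⟨.span ℂ ({e} ∪ ((fun k => (S ^ k) x) '' Iic p.natDegree ∪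
          (fun k => (T ^ k) x) '' Iic p.natDegree)),
        .span_of_finite ℂ ((finite_singleton e).union
          (((finite_Iic _).image _).union ((finite_Iic _).image _))),
        Submodule.subset_span (.inl rfl),
        fun k hk => Submodule.subset_span (.inr (.inl ⟨k, hk, rfl⟩)),
        fun k hk => Submodule.subset_span (.inr (.inr ⟨k, hk, rfl⟩))⟩
    have : CompleteSpace F := FiniteDimensional.complete ℂ F
    have hrange : ∀ {v}, v ∈ F → v ∈ range F.subtypeₗᵢ := fun hv => ⟨⟨_, hv⟩, rfl⟩
    obtain ⟨e, rfl⟩ := hrange heF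
    obtain ⟨x, rfl⟩ := hrange (hSF 0 (Nat.zero_le _))
    exact norm_pow_four_le_re_inner_add_of_isometry hη.le hS hT hTS hs hf he hex hSe
      (fun u hu => (hp u hu).le) (fun k hk => hrange (hSF k hk)) fun k hk => hrange (hTF k hk)
  refine le_of_forall_pos_le_add fun η hη => ?_
  have h := happrox (η / (4 * (‖x‖ ^ 2 + 1))) (by positivity)
  have : 4 * (η / (4 * (‖x‖ ^ 2 + 1))) * ‖x‖ ^ 2 ≤ η := by
    rw [← mul_div_assoc, mul_div_mul_left _ _ four_ne_zero, div_mul_eq_mul_div,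
      div_le_iff₀ (by positivity)]
    nlinarith
  linarith

end Hilbert

/-! ### Pinchings -/

section Pinching

/-- The pinching of `X` by the projection `P`, i.e. the block-diagonal part of `X` with respect to
`P` and `1 - P`. -/
def pinching {R : Type*} [Ring R] (P X : R) : R := P * X * P + (1 - P) * X * (1 - P)

theorem pinching_mem_Icc {R : Type*} [Ring R] [StarRing R] [PartialOrder R] [StarOrderedRing R]
    [Algebra ℝ R] {P X : R} {l r : ℝ} (hP : IsStarProjection P)
    (hX : X ∈ Icc (algebraMap ℝ R l) (algebraMap ℝ R r)) :
    pinching P X ∈ Icc (algebraMap ℝ R l) (algebraMap ℝ R r) := by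
  have hscalar : ∀ t : ℝ, pinching P (algebraMap ℝ R t) = algebraMap ℝ R t := fun t => by
    rw [pinching, ← Algebra.commutes t P, ← Algebra.commutes t (1 - P), mul_assoc, mul_assoc,
      hP.isIdempotentElem.eq, hP.one_sub.isIdempotentElem.eq, ← mul_add, add_sub_cancel, mul_one]
  have hmono : ∀ {Y Z : R}, Y ≤ Z → pinching P Y ≤ pinching P Z := fun h => by
    have hconj : ∀ {Q : R}, IsStarProjection Q → Q * _ * Q ≤ Q * _ * Q := fun {Q} hQ => by
      simpa only [hQ.isSelfAdjoint.star_eq] using star_left_conjugate_le_conjugate h Q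
    exact add_le_add (hconj hP) (hconj hP.one_sub)
  exact ⟨hscalar l ▸ hmono hX.1, hscalar r ▸ hmono hX.2⟩

theorem pinching_eq_average {R : Type*} [Ring R] [Algebra ℝ R] (P X : R) :
    pinching P X = (1 / 2 : ℝ) • X + (1 - 1 / 2 : ℝ) • ((2 * P - 1) * X * (2 * P - 1)) := by
  simp only [pinching, mul_sub, sub_mul, two_mul, add_mul, mul_add, one_mul, mul_one]
  module

variable {H : Type*} [NormedAddCommGroup H] [InnerProductSpace ℂ H] [CompleteSpace H]
  {P X : H →L[ℂ] H} {f : ℝ → ℝ} {J : Set ℝ}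

theorem OperatorConvexOn.cfc_pinching_le (hf : OperatorConvexOn H J f) (hP : IsStarProjection P)
    (hX : IsSelfAdjoint X) (hXJ : spectrum ℝ X ⊆ J) (hcont : ContinuousOn f (spectrum ℝ X)) :
    cfc f (pinching P X) ≤ pinching P (cfc f X) := by
  let U : unitary (H →L[ℂ] H) := ⟨2 * P - 1, hP.two_mul_sub_one_mem_unitary⟩
  have hU : ∀ Y, Unitary.conjStarAlgAut ℝ (H →L[ℂ] H) U Y = (2 * P - 1) * Y * (2 * P - 1) :=
    fun Y => by simp [U, hP.isSelfAdjoint.star_eq, two_mul]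
  have hUcont : Continuous (Unitary.conjStarAlgAut ℝ (H →L[ℂ] H) U) := by
    rw [funext hU]
    fun_prop
  rw [pinching_eq_average, pinching_eq_average, ← hU, ← hU,
    StarAlgHomClass.map_cfc _ f X hcont hUcont hX (hX.map _)]
  refine hf _ (by norm_num) _ _ hX (hX.map _) hXJ ?_
  rwa [AlgEquiv.spectrum_eq]

omit [CompleteSpace H] in
theorem pinching_apply_of_apply_eq_self {v : H} (hv : P v = v) :
    pinching P X v = P (X v) := by
  simp [pinching, hv]

omit [CompleteSpace H] in
theorem pinching_apply_of_apply_eq_zero {v : H} (hv : P v = 0) :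
    pinching P X v = X v - P (X v) := by
  simp [pinching, hv]

end Pinching

section Dilation

variable {E H : Type*} [NormedAddCommGroup E] [InnerProductSpace ℂ E] [CompleteSpace E]
  [NormedAddCommGroup H] [InnerProductSpace ℂ H] [CompleteSpace H]
  {V : E →ₗᵢ[ℂ] H} {X T : H →L[ℂ] H} {e : H} {l r m : ℝ} {f : ℝ → ℝ} {s : Set ℝ}

/-- The orthogonal projection `V V†` onto the range of the isometry `V`. -/
noncomputable def rangeProjection (V : E →ₗᵢ[ℂ] H) : H →L[ℂ] H :=
  V.toContinuousLinearMap ∘L adjoint V.toContinuousLinearMap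

theorem rangeProjection_apply (V : E →ₗᵢ[ℂ] H) (v : H) :
    rangeProjection V v = V (adjoint V.toContinuousLinearMap v) := rfl

theorem rangeProjection_apply_map (V : E →ₗᵢ[ℂ] H) (y : E) : rangeProjection V (V y) = V y := by
  rw [rangeProjection_apply, adjoint_toContinuousLinearMap_apply_self]

theorem isStarProjection_rangeProjection (V : E →ₗᵢ[ℂ] H) :
    IsStarProjection (rangeProjection V) where
  isIdempotentElem := by
    ext v
    rw [mul_apply_eq_comp, rangeProjection_apply V v, rangeProjection_apply_map]
  isSelfAdjoint := by
    rw [IsSelfAdjoint, star_eq_adjoint, rangeProjection, adjoint_comp, adjoint_adjoint]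

theorem isStarProjection_rangeProjection_add_rankOne (he : ‖e‖ = 1)
    (hVe : adjoint V.toContinuousLinearMap e = 0) :
    IsStarProjection (rangeProjection V + rankOne ℂ e e) := by
  refine (isStarProjection_rangeProjection V).add (isStarProjection_rankOne_self he) ?_
  ext v
  simp [rangeProjection_apply, hVe]

theorem pinching_rangeProjection_map_mem_range (y : E) :
    pinching (rangeProjection V) T (V y) ∈ range V := by
  rw [pinching_apply_of_apply_eq_self (rangeProjection_apply_map V y)]
  exact ⟨_, rfl⟩

theorem compression_pinching_rangeProjection :
    compression V (pinching (rangeProjection V) T) = compression V T := by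
  ext1 y
  refine V.injective ((map_compression_apply (pinching_rangeProjection_map_mem_range y)).trans ?_)
  rw [pinching_apply_of_apply_eq_self (rangeProjection_apply_map V y)]
  rfl

theorem eq_pinching_rangeProjection_add_rankOne {x : E} (hT : IsSelfAdjoint T)
    (hTV : ∀ y, T (V y) - rangeProjection V (T (V y)) = inner ℂ x y • e) :
    T = pinching (rangeProjection V) T + rankOne ℂ (V x) e + rankOne ℂ e (V x) := by
  have hlower : (1 - rangeProjection V) * T * rangeProjection V = rankOne ℂ e (V x) := by
    ext v
    have hv := hTV (adjoint V.toContinuousLinearMap v)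
    rwa [adjoint_inner_right] at hv
  have hupper : rangeProjection V * T * (1 - rangeProjection V) = rankOne ℂ (V x) e := by
    have hP := isStarProjection_rangeProjection V
    have hstar := congrArg star hlower
    rwa [star_mul, star_mul, hP.isSelfAdjoint.star_eq, hP.one_sub.isSelfAdjoint.star_eq,
      hT.star_eq, star_eq_adjoint, adjoint_rankOne, ← mul_assoc] at hstar
  rw [← hlower, ← hupper, pinching]
  noncomm_ring

theorem rangeProjection_add_rankOne_apply_map (hVe : adjoint V.toContinuousLinearMap e = 0)
    (y : E) : (rangeProjection V + rankOne ℂ e e) (V y) = V y := by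
  rw [add_apply, rankOne_apply, ← V.coe_toContinuousLinearMap, ← adjoint_inner_left, hVe,
    inner_zero_left, zero_smul, add_zero, V.coe_toContinuousLinearMap, rangeProjection_apply_map]

theorem pinching_rangeProjection_add_rankOne_apply_map (hX : IsSelfAdjoint X)
    (hVe : adjoint V.toContinuousLinearMap e = 0) (y : E) :
    pinching (rangeProjection V + rankOne ℂ e e) X (V y) =
      V (compression V X y) + inner ℂ (adjoint V.toContinuousLinearMap (X e)) y • e := by
  rw [pinching_apply_of_apply_eq_self (rangeProjection_add_rankOne_apply_map hVe y), add_apply,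
    rankOne_apply, adjoint_inner_left]
  exact congrArg (_ + · • e) (hX.isSymmetric e (V y)).symm

theorem pinching_rangeProjection_add_rankOne_apply_self (hX : IsSelfAdjoint X) (he : ‖e‖ = 1)
    (hVe : adjoint V.toContinuousLinearMap e = 0) :
    pinching (rangeProjection V + rankOne ℂ e e) X e =
      V (adjoint V.toContinuousLinearMap (X e)) + (inner ℂ e (X e)).re • e := by
  have hQe : (rangeProjection V + rankOne ℂ e e) e = e := by
    rw [add_apply, rankOne_apply, rangeProjection_apply, hVe, map_zero, zero_add,
      inner_self_eq_one_of_norm_eq_one he, one_smul]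
  have hreal : ((inner ℂ e (X e)).re : ℂ) = inner ℂ e (X e) :=
    hX.isSymmetric.coe_re_inner_self_apply e
  rw [pinching_apply_of_apply_eq_self hQe, add_apply, rankOne_apply, rangeProjection_apply,
    ← Complex.coe_smul, hreal]

theorem compression_pinching_rangeProjection_add_rankOne (hX : IsSelfAdjoint X)
    (hVe : adjoint V.toContinuousLinearMap e = 0) :
    compression V (pinching (rangeProjection V + rankOne ℂ e e) X) = compression V X := by
  ext1 y
  change adjoint V.toContinuousLinearMap (pinching _ X (V y)) = _
  rw [pinching_rangeProjection_add_rankOne_apply_map hX hVe, map_add, map_smul, hVe, smul_zero,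
    add_zero, adjoint_toContinuousLinearMap_apply_self]

theorem norm_pow_four_le_re_inner_cfc_sub_re_inner_cfc_compression {x : E} {ε : ℝ}
    (hT : T ∈ Icc (algebraMap ℝ (H →L[ℂ] H) l) (algebraMap ℝ (H →L[ℂ] H) r))
    (hTV : ∀ y, T (V y) - rangeProjection V (T (V y)) = inner ℂ x y • e)
    (hTe : T e - rangeProjection V (T e) = ε • e) (hs : Icc l r ⊆ interior s)
    (hf : StrongConvexOn s m f) (he : ‖e‖ = 1) (hVe : adjoint V.toContinuousLinearMap e = 0) :
    m / 2 * ‖x‖ ^ 4 ≤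
      (inner ℂ (V x) (cfc f T (V x))).re - (inner ℂ x (cfc f (compression V T) x)).re := by
  have hcont : ContinuousOn f (Icc l r) := (continuousOn_interior_of_strongConvexOn hf).mono hs
  have hTS := eq_pinching_rangeProjection_add_rankOne (mem_Icc_algebraMap_iff.1 hT).1 hTV
  have hS := pinching_mem_Icc (isStarProjection_rangeProjection V) hT
  have hPe : rangeProjection V e = 0 := by rw [rangeProjection_apply, hVe, map_zero]
  have hSe : pinching (rangeProjection V) T e = ε • e :=
    (pinching_apply_of_apply_eq_zero hPe).trans hTe
  have hex : inner ℂ e (V x) = 0 := by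
    rw [← V.coe_toContinuousLinearMap, ← adjoint_inner_left, hVe, inner_zero_left]
  have hgap := norm_pow_four_le_re_inner_cfc_sub hS hT hTS hs hf he hex hSe
  rwa [sub_apply, inner_sub_right, Complex.sub_re, V.norm_map,
    ← re_inner_cfc_compression_apply_self hS hcont pinching_rangeProjection_map_mem_range,
    compression_pinching_rangeProjection] at hgap

namespace OperatorConvexOn

theorem re_inner_cfc_pinching_apply_self_le {P : H →L[ℂ] H} {J : Set ℝ} {v : H}
    (hf : OperatorConvexOn H J f) (hP : IsStarProjection P) (hX : IsSelfAdjoint X)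
    (hXJ : spectrum ℝ X ⊆ J) (hcont : ContinuousOn f (spectrum ℝ X)) (hv : P v = v) :
    (inner ℂ v (cfc f (pinching P X) v)).re ≤ (inner ℂ v (cfc f X v)).re := by
  refine (re_inner_apply_le_of_le (hf.cfc_pinching_le hP hX hXJ hcont) v).trans_eq ?_
  rw [pinching_apply_of_apply_eq_self hv, ← hP.isSelfAdjoint.isSymmetric.apply_clm, hv]

theorem norm_pow_four_le_re_inner_compression (hf : OperatorConvexOn H (Icc l r) f)
    (hX : X ∈ Icc (algebraMap ℝ (H →L[ℂ] H) l) (algebraMap ℝ (H →L[ℂ] H) r))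
    (hs : Icc l r ⊆ interior s) (hfs : StrongConvexOn s m f) (he : ‖e‖ = 1)
    (hVe : adjoint V.toContinuousLinearMap e = 0) {x : E}
    (hx : adjoint V.toContinuousLinearMap (X e) = x) :
    m / 2 * ‖x‖ ^ 4 ≤
      (inner ℂ x ((compression V (cfc f X) - cfc f (compression V X)) x)).re := by
  obtain ⟨hXsa, hXs⟩ := mem_Icc_algebraMap_iff.1 hX
  have hQ := isStarProjection_rangeProjection_add_rankOne he hVe
  have hcont : ContinuousOn f (spectrum ℝ X) :=
    ((continuousOn_interior_of_strongConvexOn hfs).mono hs).mono hXs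
  have hoff : ∀ (y : E) (c : ℂ),
      V y + c • e - rangeProjection V (V y + c • e) = c • e := fun y c => by
    rw [map_add, map_smul, rangeProjection_apply_map, rangeProjection_apply V e, hVe, map_zero,
      smul_zero, add_zero, add_sub_cancel_left]
  have hcfc := hf.re_inner_cfc_pinching_apply_self_le hQ hXsa hXs hcont
    (rangeProjection_add_rankOne_apply_map hVe x)
  have hT := pinching_mem_Icc hQ hX
  have hTV := pinching_rangeProjection_add_rankOne_apply_map (V := V) hXsa hVe
  have hTe := pinching_rangeProjection_add_rankOne_apply_self (V := V) hXsa he hVe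
  rw [← compression_pinching_rangeProjection_add_rankOne hXsa hVe, sub_apply, inner_sub_right,
    Complex.sub_re, inner_compression_apply]
  generalize pinching (rangeProjection V + rankOne ℂ e e) X = T at *
  refine (norm_pow_four_le_re_inner_cfc_sub_re_inner_cfc_compression hT (fun y => ?_)
    (ε := (inner ℂ e (X e)).re) ?_ hs hfs he hVe).trans (sub_le_sub_right hcfc _)
  · rw [hTV, hx, hoff]
  · rw [hTe, ← Complex.coe_smul, hoff]

end OperatorConvexOn

end Dilation

/-! ### Cuntz pairs -/

/-- A Cuntz pair: isometries whose ranges are orthogonal complements of each other. For operators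
on `H` it is an identification of `H ⊕ H` with `H`. -/
structure IsCuntzPair {R : Type*} [Ring R] [StarRing R] (S T : R) : Prop where
  star_left_mul_self : star S * S = 1
  star_right_mul_self : star T * T = 1
  add_mul_star : S * star S + T * star T = 1

namespace IsCuntzPair

section Ring

variable {R : Type*} [Ring R] [StarRing R] {S T : R}

theorem symm (h : IsCuntzPair S T) : IsCuntzPair T S :=
  ⟨h.star_right_mul_self, h.star_left_mul_self, (add_comm _ _).trans h.add_mul_star⟩

theorem star_left_mul_right (h : IsCuntzPair S T) : star S * T = 0 := by
  have key : star S * (S * star S + T * star T) * T = star S * T := by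
    rw [h.add_mul_star, mul_one]
  rwa [mul_add, add_mul, ← mul_assoc, h.star_left_mul_self, one_mul, mul_assoc, mul_assoc,
    h.star_right_mul_self, mul_one, add_eq_left] at key

theorem star_right_mul_left (h : IsCuntzPair S T) : star T * S = 0 := h.symm.star_left_mul_right

variable [Algebra ℝ R]

/-- The block-diagonal embedding `(A, B) ↦ S A S† + T B T†` attached to a Cuntz pair `S, T`. -/
def diag (h : IsCuntzPair S T) : R × R →⋆ₐ[ℝ] R where
  toFun p := S * p.1 * star S + T * p.2 * star T
  map_one' := by simpa using h.add_mul_star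
  map_mul' p q := by
    have hSS : ∀ Y, star S * (S * Y) = Y := fun Y => by
      rw [← mul_assoc, h.star_left_mul_self, one_mul]
    have hTT : ∀ Y, star T * (T * Y) = Y := fun Y => by
      rw [← mul_assoc, h.star_right_mul_self, one_mul]
    have hST : ∀ Y, star S * (T * Y) = 0 := fun Y => by
      rw [← mul_assoc, h.star_left_mul_right, zero_mul]
    have hTS : ∀ Y, star T * (S * Y) = 0 := fun Y => by
      rw [← mul_assoc, h.star_right_mul_left, zero_mul]
    simp only [Prod.fst_mul, Prod.snd_mul, mul_add, add_mul, mul_assoc, hSS, hTT, hST, hTS,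
      mul_zero, add_zero, zero_add]
  map_zero' := by simp
  map_add' p q := by simp only [Prod.fst_add, Prod.snd_add, mul_add, add_mul]; abel
  commutes' t := by
    simp only [Algebra.algebraMap_eq_smul_one, Prod.smul_fst, Prod.smul_snd, Prod.fst_one,
      Prod.snd_one, mul_smul_comm, smul_mul_assoc, mul_one, ← smul_add, h.add_mul_star]
  map_star' p := by simp [star_mul, mul_assoc]

theorem diag_apply (h : IsCuntzPair S T) (A B : R) :
    h.diag (A, B) = S * A * star S + T * B * star T := rfl

theorem star_left_mul_diag (h : IsCuntzPair S T) (A B : R) :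
    star S * h.diag (A, B) = A * star S := by
  rw [diag_apply, mul_add, ← mul_assoc, ← mul_assoc, ← mul_assoc, ← mul_assoc,
    h.star_left_mul_self, h.star_left_mul_right, one_mul, zero_mul, zero_mul, add_zero]

theorem star_right_mul_diag (h : IsCuntzPair S T) (A B : R) :
    star T * h.diag (A, B) = B * star T := by
  rw [diag_apply, mul_add, ← mul_assoc, ← mul_assoc, ← mul_assoc, ← mul_assoc,
    h.star_right_mul_self, h.star_right_mul_left, one_mul, zero_mul, zero_mul, zero_add]

variable [StarModule ℝ R] {α β : ℝ}

theorem rotate (h : IsCuntzPair S T) (hαβ : α ^ 2 + β ^ 2 = 1) :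
    IsCuntzPair (α • S + β • T) (β • S - α • T) := by
  refine ⟨?_, ?_, ?_⟩
  · simp only [star_add, star_smul, star_trivial, add_mul, mul_add, smul_mul_smul_comm,
      h.star_left_mul_self, h.star_right_mul_self, h.star_left_mul_right, h.star_right_mul_left]
    linear_combination (norm := module) hαβ • (1 : R)
  · simp only [star_sub, star_smul, star_trivial, sub_mul, mul_sub, smul_mul_smul_comm,
      h.star_left_mul_self, h.star_right_mul_self, h.star_left_mul_right, h.star_right_mul_left]
    linear_combination (norm := module) hαβ • (1 : R)
  · simp only [star_add, star_sub, star_smul, star_trivial, add_mul, mul_add, sub_mul, mul_sub,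
      smul_mul_smul_comm]
    linear_combination (norm := module) hαβ • (S * star S + T * star T) + h.add_mul_star

theorem star_rotate_mul_diag_mul_rotate_left (h : IsCuntzPair S T) (A B : R) :
    star (α • S + β • T) * h.diag (A, B) * (α • S + β • T) = α ^ 2 • A + β ^ 2 • B := by
  simp only [star_add, star_smul, star_trivial, add_mul, smul_mul_assoc, h.star_left_mul_diag,
    h.star_right_mul_diag, mul_add, mul_smul_comm, mul_assoc, h.star_left_mul_self,
    h.star_right_mul_self, h.star_left_mul_right, h.star_right_mul_left, mul_one, mul_zero]
  module

theorem star_rotate_mul_diag_mul_rotate_right (h : IsCuntzPair S T) (A B : R) :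
    star (α • S + β • T) * h.diag (A, B) * (β • S - α • T) = (α * β) • (A - B) := by
  simp only [star_add, star_smul, star_trivial, add_mul, smul_mul_assoc, h.star_left_mul_diag,
    h.star_right_mul_diag, mul_sub, mul_smul_comm, mul_assoc, h.star_left_mul_self,
    h.star_right_mul_self, h.star_left_mul_right, h.star_right_mul_left, mul_one, mul_zero]
  module

end Ring

section Hilbert

variable {H : Type*} [NormedAddCommGroup H] [InnerProductSpace ℂ H] [CompleteSpace H]
  {S T A B : H →L[ℂ] H} {f : ℝ → ℝ} {J : Set ℝ}

theorem spectrum_diag_subset (h : IsCuntzPair S T) (hA : spectrum ℝ A ⊆ J)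
    (hB : spectrum ℝ B ⊆ J) : spectrum ℝ (h.diag (A, B)) ⊆ J := by
  refine (AlgHom.spectrum_apply_subset h.diag (A, B)).trans ?_
  rw [Prod.spectrum_eq]
  exact union_subset hA hB

theorem isSelfAdjoint_diag (h : IsCuntzPair S T) (hA : IsSelfAdjoint A) (hB : IsSelfAdjoint B) :
    IsSelfAdjoint (h.diag (A, B)) :=
  IsSelfAdjoint.map (x := (A, B)) (by ext1 <;> simp [hA.star_eq, hB.star_eq]) h.diag

theorem cfc_diag (h : IsCuntzPair S T) (hA : IsSelfAdjoint A) (hB : IsSelfAdjoint B)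
    (hf : ContinuousOn f (spectrum ℝ A ∪ spectrum ℝ B)) :
    cfc f (h.diag (A, B)) = h.diag (cfc f A, cfc f B) := by
  have : ContinuousFunctionalCalculus ℝ ((H →L[ℂ] H) × (H →L[ℂ] H)) IsSelfAdjoint :=
    IsSelfAdjoint.instIsometricContinuousFunctionalCalculus.toContinuousFunctionalCalculus
  have hAB : IsSelfAdjoint (A, B) := by ext1 <;> simp [hA.star_eq, hB.star_eq]
  have hcont : Continuous h.diag := by
    change Continuous fun p : (H →L[ℂ] H) × (H →L[ℂ] H) => S * p.1 * star S + T * p.2 * star T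
    fun_prop
  rw [← cfc_map_prod (S := ℝ) f A B hf hAB hA hB]
  exact (StarAlgHomClass.map_cfc (S := ℝ) h.diag f (A, B) (by rwa [Prod.spectrum_eq]) hcont hAB
    (h.isSelfAdjoint_diag hA hB)).symm

end Hilbert

end IsCuntzPair

section Existence

variable {H : Type*} [NormedAddCommGroup H] [InnerProductSpace ℂ H] [CompleteSpace H]

theorem exists_linearIsometry_hilbertBasis {ι : Type*} (b : HilbertBasis ι ℂ H) {σ : ι → ι}
    (hσ : Function.Injective σ) : ∃ V : H →ₗᵢ[ℂ] H, ∀ i, V (b i) = b (σ i) := by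
  classical
  have ho : Orthonormal ℂ (b ∘ σ) := b.orthonormal.comp σ hσ
  refine ⟨ho.orthogonalFamily.linearIsometry.comp b.repr.toLinearIsometry, fun i => ?_⟩
  change ho.orthogonalFamily.linearIsometry (b.repr (b i)) = _
  rw [b.repr_self, OrthogonalFamily.linearIsometry_apply_single]
  simp

theorem adjoint_apply_eq_zero_of_hilbertBasis {ι : Type*} (b : HilbertBasis ι ℂ H)
    {T : H →L[ℂ] H} {v : H} (hv : ∀ i, inner ℂ (T (b i)) v = 0) : adjoint T v = 0 := by
  refine b.repr.injective (lp.ext (funext fun i => ?_))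
  rw [b.repr_apply_apply, adjoint_inner_right, hv, map_zero]
  rfl

theorem exists_isCuntzPair (hinf : ¬FiniteDimensional ℂ H) :
    ∃ S T : H →L[ℂ] H, IsCuntzPair S T := by
  obtain ⟨ι, b, -⟩ := exists_hilbertBasis ℂ H
  have hι : Infinite ι := not_finite_iff_infinite.1 fun hfin => by
    have := Fintype.ofFinite ι
    exact hinf b.toOrthonormalBasis.toBasis.finiteDimensional_of_finite
  obtain ⟨σ⟩ : Nonempty (ι ⊕ ι ≃ ι) := by
    rw [← Cardinal.eq, Cardinal.mk_sum, Cardinal.lift_id,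
      Cardinal.add_eq_self (Cardinal.aleph0_le_mk ι)]
  obtain ⟨S, hS⟩ := exists_linearIsometry_hilbertBasis b (σ.injective.comp Sum.inl_injective)
  obtain ⟨T, hT⟩ := exists_linearIsometry_hilbertBasis b (σ.injective.comp Sum.inr_injective)
  have horth : ∀ i j, inner ℂ (S (b i)) (T (b j)) = 0 := fun i j => by
    rw [hS, hT]
    exact b.orthonormal.2 fun h => Sum.inl_ne_inr (σ.injective h)
  refine ⟨S.toContinuousLinearMap, T.toContinuousLinearMap,
    (norm_map_iff_adjoint_comp_self _).1 S.norm_map,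
    (norm_map_iff_adjoint_comp_self _).1 T.norm_map,
    ext_on (Submodule.dense_iff_topologicalClosure_eq_top.2 b.dense_span) ?_⟩
  rintro _ ⟨j, rfl⟩
  obtain ⟨i | i, rfl⟩ := σ.surjective j
  · have hT0 : adjoint T.toContinuousLinearMap (S (b i)) = 0 :=
      adjoint_apply_eq_zero_of_hilbertBasis b fun k => inner_eq_zero_symm.1 (horth i k)
    change S (adjoint S.toContinuousLinearMap (b (σ (.inl i)))) + T (adjoint _ (b _)) = b _
    rw [← Function.comp_apply (f := σ), ← hS, hT0, adjoint_toContinuousLinearMap_apply_self,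
      map_zero, add_zero]
  · have hS0 : adjoint S.toContinuousLinearMap (T (b i)) = 0 :=
      adjoint_apply_eq_zero_of_hilbertBasis b fun k => horth k i
    change S (adjoint _ (b (σ (.inr i)))) + T (adjoint T.toContinuousLinearMap (b _)) = b _
    rw [← Function.comp_apply (f := σ), ← hT, hS0, adjoint_toContinuousLinearMap_apply_self,
      map_zero, zero_add]

end Existence

/-! ### The Jensen gap -/

section Main

variable {H : Type*} [NormedAddCommGroup H] [InnerProductSpace ℂ H] [CompleteSpace H]
  {S T A B : H →L[ℂ] H} {l r m t : ℝ} {f : ℝ → ℝ} {s J : Set ℝ}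

theorem jensenGap_nonneg (hf : OperatorConvexOn H J f) (ht : t ∈ Icc (0 : ℝ) 1)
    (hA : IsSelfAdjoint A) (hB : IsSelfAdjoint B) (hAJ : spectrum ℝ A ⊆ J)
    (hBJ : spectrum ℝ B ⊆ J) : 0 ≤ jensenGap f t A B :=
  sub_nonneg.2 (hf t ht A B hA hB hAJ hBJ)

theorem compression_rotate_diag (h : IsCuntzPair S T) {α β : ℝ} {V : H →ₗᵢ[ℂ] H}
    (hV : V.toContinuousLinearMap = α • S + β • T) (A B : H →L[ℂ] H) :
    compression V (h.diag (A, B)) = α ^ 2 • A + β ^ 2 • B := by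
  rw [← h.star_rotate_mul_diag_mul_rotate_left, ← hV]
  rfl

theorem norm_pow_four_le_re_inner_jensenGap (h : IsCuntzPair S T)
    (hf : OperatorConvexOn H (Icc l r) f) (hfs : StrongConvexOn s m f) (hs : Icc l r ⊆ interior s)
    (hA : A ∈ Icc (algebraMap ℝ (H →L[ℂ] H) l) (algebraMap ℝ (H →L[ℂ] H) r))
    (hB : B ∈ Icc (algebraMap ℝ (H →L[ℂ] H) l) (algebraMap ℝ (H →L[ℂ] H) r))
    (ht : t ∈ Icc (0 : ℝ) 1) {w x : H} (hw : ‖w‖ = 1) (hx : (√t * √(1 - t)) • (A - B) w = x) :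
    m / 2 * ‖x‖ ^ 4 ≤ (inner ℂ x (jensenGap f t A B x)).re := by
  obtain ⟨hAsa, hAs⟩ := mem_Icc_algebraMap_iff.1 hA
  obtain ⟨hBsa, hBs⟩ := mem_Icc_algebraMap_iff.1 hB
  have hcont : ContinuousOn f (Icc l r) := (continuousOn_interior_of_strongConvexOn hfs).mono hs
  have hrot := h.rotate (α := √t) (β := √(1 - t)) (by
    rw [Real.sq_sqrt ht.1, Real.sq_sqrt (sub_nonneg.2 ht.2), add_sub_cancel])
  obtain ⟨V, hV⟩ : ∃ V : H →ₗᵢ[ℂ] H, V.toContinuousLinearMap = √t • S + √(1 - t) • T :=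
    ⟨⟨_, (norm_map_iff_adjoint_comp_self _).2 hrot.star_left_mul_self⟩, rfl⟩
  have hcomp : ∀ C D, compression V (h.diag (C, D)) = t • C + (1 - t) • D := fun C D => by
    rw [compression_rotate_diag h hV, Real.sq_sqrt ht.1, Real.sq_sqrt (sub_nonneg.2 ht.2)]
  have hW : ‖(√(1 - t) • S - √t • T) w‖ = 1 := by
    rw [(norm_map_iff_adjoint_comp_self _).2 hrot.star_right_mul_self, hw]
  have hVW : adjoint V.toContinuousLinearMap ((√(1 - t) • S - √t • T) w) = 0 := by
    rw [hV, ← star_eq_adjoint, ← mul_apply_eq_comp, hrot.star_left_mul_right, zero_apply]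
  have hVX : adjoint V.toContinuousLinearMap (h.diag (A, B) ((√(1 - t) • S - √t • T) w)) = x := by
    rw [hV, ← star_eq_adjoint, ← mul_apply_eq_comp, ← mul_apply_eq_comp,
      h.star_rotate_mul_diag_mul_rotate_right, smul_apply, hx]
  have hX := mem_Icc_algebraMap_iff.2 ⟨h.isSelfAdjoint_diag hAsa hBsa,
    h.spectrum_diag_subset hAs hBs⟩
  have hgap := hf.norm_pow_four_le_re_inner_compression hX hs hfs hW hVW hVX
  rwa [h.cfc_diag hAsa hBsa (hcont.mono (union_subset hAs hBs)), hcomp, hcomp] at hgap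

theorem norm_pow_four_le_norm_sq_mul_re_inner_jensenGap (h : IsCuntzPair S T)
    (hf : OperatorConvexOn H (Icc l r) f) (hfs : StrongConvexOn s m f) (hs : Icc l r ⊆ interior s)
    (hA : A ∈ Icc (algebraMap ℝ (H →L[ℂ] H) l) (algebraMap ℝ (H →L[ℂ] H) r))
    (hB : B ∈ Icc (algebraMap ℝ (H →L[ℂ] H) l) (algebraMap ℝ (H →L[ℂ] H) r))
    (ht : t ∈ Ioo (0 : ℝ) 1) {w y : H} (hy : (A - B) w = y) :
    m / 2 * (t * (1 - t)) * ‖y‖ ^ 4 ≤ ‖w‖ ^ 2 * (inner ℂ y (jensenGap f t A B y)).re := by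
  obtain rfl | hw := eq_or_ne w 0
  · simp [← hy]
  have hw' : 0 < ‖w‖ := norm_pos_iff.2 hw
  have ht' : 0 < 1 - t := sub_pos.2 ht.2
  let k := √t * √(1 - t) * ‖w‖⁻¹
  have hk : k ^ 2 * ‖w‖ ^ 2 = t * (1 - t) := by
    rw [mul_pow, mul_pow, Real.sq_sqrt ht.1.le, Real.sq_sqrt ht'.le, inv_pow,
      inv_mul_cancel_right₀ (by positivity)]
  have hk0 : 0 < k ^ 2 := pos_of_mul_pos_left (hk ▸ mul_pos ht.1 ht') (sq_nonneg ‖w‖)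
  have hgap := norm_pow_four_le_re_inner_jensenGap (w := ‖w‖⁻¹ • w) (x := k • y) h hf hfs hs hA hB
    (Ioo_subset_Icc_self ht) (by rw [norm_smul, norm_inv, norm_norm, inv_mul_cancel₀ hw'.ne'])
    (by rw [map_smul_of_tower, hy, smul_smul])
  rw [map_smul_of_tower, inner_smul_left_eq_smul, inner_smul_right_eq_smul, smul_smul, ← sq,
    Complex.smul_re, smul_eq_mul, norm_smul, mul_pow, Real.norm_eq_abs,
    Even.pow_abs (by decide)] at hgap
  refine le_of_mul_le_mul_left ?_ hk0
  calc k ^ 2 * (m / 2 * (t * (1 - t)) * ‖y‖ ^ 4)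
      = ‖w‖ ^ 2 * (m / 2 * (k ^ 4 * ‖y‖ ^ 4)) := by rw [← hk]; ring
    _ ≤ ‖w‖ ^ 2 * (k ^ 2 * (inner ℂ y (jensenGap f t A B y)).re) := by gcongr
    _ = _ := by ring

theorem norm_sq_le_re_inner_jensenGap {R : H →L[ℂ] H} (h : IsCuntzPair S T)
    (hf : OperatorConvexOn H (Icc l r) f) (hfs : StrongConvexOn s m f) (hs : Icc l r ⊆ interior s)
    (hA : A ∈ Icc (algebraMap ℝ (H →L[ℂ] H) l) (algebraMap ℝ (H →L[ℂ] H) r))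
    (hB : B ∈ Icc (algebraMap ℝ (H →L[ℂ] H) l) (algebraMap ℝ (H →L[ℂ] H) r))
    (ht : t ∈ Ioo (0 : ℝ) 1) (hR : (A - B) * R = 1) (y : H) :
    m / 2 * (t * (1 - t)) / ‖R‖ ^ 2 * ‖y‖ ^ 2 ≤ (inner ℂ y (jensenGap f t A B y)).re := by
  obtain rfl | hy := eq_or_ne y 0
  · simp
  obtain ⟨hAsa, hAs⟩ := mem_Icc_algebraMap_iff.1 hA
  obtain ⟨hBsa, hBs⟩ := mem_Icc_algebraMap_iff.1 hB
  have hRy : (A - B) (R y) = y := by rw [← mul_apply_eq_comp, hR, one_apply_eq_self]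
  have hy0 : 0 < ‖y‖ := norm_pos_iff.2 hy
  have hR0 : 0 < ‖R‖ := norm_pos_iff.2 (by rintro rfl; exact hy (by rw [← hRy]; simp))
  have hnonneg : 0 ≤ (inner ℂ y (jensenGap f t A B y)).re := by
    simpa using re_inner_apply_le_of_le
      (jensenGap_nonneg hf (Ioo_subset_Icc_self ht) hAsa hBsa hAs hBs) y
  have hgap : m / 2 * (t * (1 - t)) * ‖y‖ ^ 4 ≤
      (‖R‖ * ‖y‖) ^ 2 * (inner ℂ y (jensenGap f t A B y)).re :=
    (norm_pow_four_le_norm_sq_mul_re_inner_jensenGap h hf hfs hs hA hB ht hRy).trans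
      (by gcongr; exact R.le_opNorm y)
  rw [div_mul_eq_mul_div, div_le_iff₀ (by positivity)]
  refine le_of_mul_le_mul_left ?_ (pow_pos hy0 2)
  linear_combination hgap

theorem OperatorConvexOn.isUnit_jensenGap (h : IsCuntzPair S T)
    (hf : OperatorConvexOn H (Icc l r) f) (hfs : StrongConvexOn s m f) (hm : 0 < m)
    (hs : Icc l r ⊆ interior s)
    (hA : A ∈ Icc (algebraMap ℝ (H →L[ℂ] H) l) (algebraMap ℝ (H →L[ℂ] H) r))
    (hB : B ∈ Icc (algebraMap ℝ (H →L[ℂ] H) l) (algebraMap ℝ (H →L[ℂ] H) r))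
    (ht : t ∈ Ioo (0 : ℝ) 1) (hAB : IsUnit (A - B)) : IsUnit (jensenGap f t A B) := by
  cases subsingleton_or_nontrivial H
  · exact isUnit_of_subsingleton _
  obtain ⟨R, hR⟩ := hAB.exists_right_inv
  have hR0 : 0 < ‖R‖ := norm_pos_iff.2 (right_ne_zero_of_mul_eq_one hR)
  have hc : 0 < m / 2 * (t * (1 - t)) / ‖R‖ ^ 2 := by
    have := ht.1
    have := sub_pos.2 ht.2
    positivity
  refine isUnit_of_forall_le_norm_inner_map _ (c := ⟨_, hc.le⟩) hc fun y => ?_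
  rw [norm_inner_symm, mul_comm]
  exact (norm_sq_le_re_inner_jensenGap h hf hfs hs hA hB ht hR y).trans
    (Complex.re_le_norm _)

theorem IsCuntzPair.exists_orthonormal [Nontrivial H] (h : IsCuntzPair S T) :
    ∃ e v : H, ‖e‖ = 1 ∧ ‖v‖ = 1 ∧ inner ℂ e v = 0 := by
  obtain ⟨u, hu⟩ := exists_norm_eq H zero_le_one
  refine ⟨S u, T u, ?_, ?_, ?_⟩
  · rw [(norm_map_iff_adjoint_comp_self _).2 h.star_left_mul_self, hu]
  · rw [(norm_map_iff_adjoint_comp_self _).2 h.star_right_mul_self, hu]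
  · rw [← adjoint_inner_right, ← star_eq_adjoint, ← mul_apply_eq_comp, h.star_left_mul_right,
      zero_apply, inner_zero_right]

theorem stmt3_general (hinf : ¬FiniteDimensional ℂ H) (hJ : IsOpen J) (hJc : Convex ℝ J)
    (hf : OperatorConvexOn H J f) (hna : ¬∃ α β : ℝ, ∀ x ∈ J, f x = α * x + β) :
    StrictOperatorConvexOn H J f := by
  intro t ht A B hA hB hAJ hBJ hAB
  refine ⟨jensenGap_nonneg hf (Ioo_subset_Icc_self ht) hA hB hAJ hBJ, ?_⟩
  have : Nontrivial H := by
    by_contra h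
    rw [not_nontrivial_iff_subsingleton] at h
    exact hinf inferInstance
  obtain ⟨S, T, hST⟩ := exists_isCuntzPair hinf
  obtain ⟨e, v, he, hv, hev⟩ := hST.exists_orthonormal
  obtain ⟨l, r, hlr, hlrJ, hsub⟩ := exists_Icc_subset_of_isOpen_of_isCompact hJ hJc
    ((ContinuousFunctionalCalculus.isCompact_spectrum A).union
      (ContinuousFunctionalCalculus.isCompact_spectrum B))
    ((ContinuousFunctionalCalculus.spectrum_nonempty A hA).inl) (union_subset hAJ hBJ)
  obtain ⟨hAs, hBs⟩ := union_subset_iff.1 (hsub.trans Ioo_subset_Icc_self)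
  obtain ⟨l', r', hlr', hlrJ', hsub'⟩ := exists_Icc_subset_of_isOpen_of_isCompact hJ hJc
    isCompact_Icc (nonempty_Icc.2 hlr.le) hlrJ
  obtain ⟨m, hm, hfm⟩ := hf.exists_strongConvexOn hJ hJc hna he hv hev hlr' hlrJ'
  exact (hf.mono hlrJ).isUnit_jensenGap hST hfm hm (by rwa [interior_Icc])
    (mem_Icc_algebraMap_iff.2 ⟨hA, hAs⟩) (mem_Icc_algebraMap_iff.2 ⟨hB, hBs⟩) ht hAB

end Main

/-- any nonlinear operator convex function on a bounded interval `(a, b)`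
is strictly operator convex on `(a, b)` (operators on an infinite-dimensional complex
Hilbert space). -/
theorem stmt3 {H : Type*} [NormedAddCommGroup H] [InnerProductSpace ℂ H] [CompleteSpace H]
    (hinf : ¬ FiniteDimensional ℂ H) (a b : ℝ) (hab : a < b)
    (f : ℝ → ℝ) (hf : ContinuousOn f (Set.Ioo a b))
    (hconv : ∀ s : ℝ, s ∈ Set.Icc (0 : ℝ) 1 → ∀ A B : H →L[ℂ] H,
      IsSelfAdjoint A → IsSelfAdjoint B →
      spectrum ℝ A ⊆ Set.Ioo a b → spectrum ℝ B ⊆ Set.Ioo a b →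
      cfc f (s • A + (1 - s) • B) ≤ s • cfc f A + (1 - s) • cfc f B)
    (hnonlin : ¬ ∃ α β : ℝ, ∀ x ∈ Set.Ioo a b, f x = α * x + β) :
    ∀ s : ℝ, s ∈ Set.Ioo (0 : ℝ) 1 → ∀ A B : H →L[ℂ] H,
      IsSelfAdjoint A → IsSelfAdjoint B →
      spectrum ℝ A ⊆ Set.Ioo a b → spectrum ℝ B ⊆ Set.Ioo a b → IsUnit (A - B) →
      0 ≤ s • cfc f A + (1 - s) • cfc f B - cfc f (s • A + (1 - s) • B) ∧
      IsUnit (s • cfc f A + (1 - s) • cfc f B - cfc f (s • A + (1 - s) • B)) :=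
  stmt3_general hinf isOpen_Ioo (convex_Ioo a b) hconv hnonlin
end

section
/- Let H be an infinite-dimensional complex Hilbert space and let f : [0,∞) → ℝ be a non-constant continuous function that is operator monotone on [0,∞), i.e., for all selfadjoint A, B ∈ B(H) with spectra in [0,∞), A ≤ B implies f(A) ≤ f(B). If A and B are positive bounded linear operators on H with A ≥ B and A − B invertible, and m = ‖(A−B)⁻¹‖⁻¹, then f(A) − f(B) ≥ (f(‖B‖ + m) − f(‖B‖))·I and f(‖B‖ + m) − f(‖B‖) > 0. In particular f(A) > f(B). -/
/-!
Let `v` be a nonzero partial isometry with `v * v = 0` and put `p = star v * v`. Inside the copy of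
the 2×2 matrices generated by `v`, every weight `w ∈ [0, 1]` is realised by a projection `r` with
`p * r * p = w • p`. A positive element `x` with `p * x * p = s • p` is dominated by
`t • p + M • (1 - p)` for every `t > s` and all large `M`. Applying an operator monotone `f` to this
with `x = a • r + b • (1 - r)` and compressing to `p` gives
`w * f a + (1 - w) * f b ≤ f (w * a + (1 - w) * b)`, so `f` is concave on `[0, ∞)`.

If `f` is not strictly increasing, then, being nondecreasing and concave, it is eventually equal to
a constant `K`. With `f M = f b = K` the same domination, not compressed, reads
`(K - f s) • p ≤ (K - f a) • r` for `s = w * a + (1 - w) * b`. As `p` is not a subprojection of `r`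
when `w < 1`, this forces `f s = K`, and `w → 1` gives `f a = K`.

Finally `a - b ≥ m` for `m = ‖(a - b)⁻¹‖⁻¹`, so `f(a) - f(b) ≥ f(b + m) - f(b)`, and by concavity
the increment `f(t + m) - f(t)` over `t ∈ [0, ‖b‖]` is smallest at `t = ‖b‖`.
-/

open Filter Set Topology

theorem antitoneOn_add_sub_of_concaveOn {𝕜 : Type*} [Field 𝕜] [LinearOrder 𝕜]
    [IsStrictOrderedRing 𝕜] {f : 𝕜 → 𝕜} {s : Set 𝕜} (hf : ConcaveOn 𝕜 s f) {m : 𝕜} (hm : 0 ≤ m) :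
    AntitoneOn (fun t ↦ f (t + m) - f t) {t | t ∈ s ∧ t + m ∈ s} := by
  intro t ⟨ht, htm⟩ u ⟨hu, hum⟩ htu
  obtain rfl | hm := hm.eq_or_lt
  · simp
  have hslope : slope f u (u + m) ≤ slope f t (t + m) := calc
    slope f u (u + m) = slope f (u + m) u := slope_comm ..
    _ ≤ slope f (u + m) t :=
      hf.slope_anti hum ⟨ht, by simpa using (htu.trans_lt (lt_add_of_pos_right u hm)).ne⟩
        ⟨hu, by simpa using hm.ne'⟩ htu
    _ = slope f t (u + m) := slope_comm ..
    _ ≤ slope f t (t + m) :=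
      hf.slope_anti ht ⟨htm, by simpa using hm.ne'⟩
        ⟨hum, by simpa using (htu.trans_lt (lt_add_of_pos_right u hm)).ne'⟩ (by gcongr)
  simpa only [slope_def_field, add_sub_cancel_left, div_le_div_iff_of_pos_right hm] using hslope

section StarSemigroup

variable {S : Type*} [Semigroup S] [StarMul S] {v : S}

theorem isStarProjection_star_mul_self (hv : v * star v * v = v) :
    IsStarProjection (star v * v) where
  isIdempotentElem := by rw [IsIdempotentElem, mul_assoc, ← mul_assoc v, hv]
  isSelfAdjoint := .star_mul_self v

theorem isStarProjection_mul_star_self (hv : v * star v * v = v) :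
    IsStarProjection (v * star v) where
  isIdempotentElem := by rw [IsIdempotentElem, ← mul_assoc, hv]
  isSelfAdjoint := .mul_star_self v

end StarSemigroup

/-- `v` is a partial isometry with `v * v = 0`: the off-diagonal matrix unit `e₂₁` of a (possibly
zero) copy of the 2×2 matrices with diagonal units `e₁₁ = star v * v` and `e₂₂ = v * star v`. -/
structure IsOffDiagonalMatrixUnit {S : Type*} [SemigroupWithZero S] [StarMul S] (v : S) : Prop where
  mul_star_mul_self : v * star v * v = v
  mul_self_eq_zero : v * v = 0

section Corners

variable {𝒜 : Type*} [Ring 𝒜] [Algebra ℝ 𝒜]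

theorem mul_smul_add_smul_one_sub_mul {p r : 𝒜} (hp : IsIdempotentElem p) {w : ℝ}
    (hprp : p * r * p = w • p) (a b : ℝ) :
    p * (a • r + b • (1 - r)) * p = (w * a + (1 - w) * b) • p := by
  simp only [mul_add, mul_sub, add_mul, sub_mul, mul_smul_comm, smul_mul_assoc, mul_one, hprp,
    hp.eq]
  module

variable [StarRing 𝒜] [StarModule ℝ 𝒜]

theorem IsOffDiagonalMatrixUnit.exists_isStarProjection_mul_mul_eq_smul {v : 𝒜}
    (hv : IsOffDiagonalMatrixUnit v) {w : ℝ} (hw : w ∈ Icc 0 1) :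
    ∃ r : 𝒜, IsStarProjection r ∧ star v * v * r * (star v * v) = w • (star v * v) := by
  set p := star v * v with hp_def
  have hp : IsStarProjection p := isStarProjection_star_mul_self hv.mul_star_mul_self
  have hpp : p * p = p := hp.isIdempotentElem
  have hvp : v * p = v := by rw [hp_def, ← mul_assoc, hv.mul_star_mul_self]
  have hpv : p * v = 0 := by rw [hp_def, mul_assoc, hv.mul_self_eq_zero, mul_zero]
  have hvsp : star v * p = 0 := by simpa [hp.isSelfAdjoint.star_eq] using congrArg star hpv
  set z := √w • p + √(1 - w) • v with hz_def
  have hzp : z * p = z := by simp only [hz_def, add_mul, smul_mul_assoc, hpp, hvp]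
  have hpz : p * z = √w • p := by
    simp only [hz_def, mul_add, mul_smul_comm, hpp, hpv, smul_zero, add_zero]
  have hsz : star z = √w • p + √(1 - w) • star v := by
    simp only [hz_def, star_add, star_smul, star_trivial, hp.isSelfAdjoint.star_eq]
  have hszz : star z * z = p := by
    rw [hsz, hz_def]
    simp only [add_mul, mul_add, smul_mul_smul_comm, hpp, hpv, hvsp, ← hp_def, smul_zero,
      add_zero, zero_add, Real.mul_self_sqrt hw.1, Real.mul_self_sqrt (sub_nonneg.2 hw.2),
      ← add_smul, add_sub_cancel, one_smul]
  have hszp : star z * p = √w • p := by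
    simpa [hp.isSelfAdjoint.star_eq] using congrArg star hpz
  refine ⟨z * star z, isStarProjection_mul_star_self (by rw [mul_assoc, hszz, hzp]), ?_⟩
  rw [← mul_assoc p, hpz, mul_assoc, hszp, smul_mul_smul_comm, hpp, Real.mul_self_sqrt hw.1]

end Corners

section CStarAlgebra

variable {𝒜 : Type*} [CStarAlgebra 𝒜] {f : ℝ → ℝ}

theorem cfc_smul_add_smul_one_sub {p : 𝒜} (hp : IsStarProjection p) (f : ℝ → ℝ) (a b : ℝ) :
    cfc f (a • p + b • (1 - p)) = f a • p + f b • (1 - p) := by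
  have hsa : IsSelfAdjoint p := hp.isSelfAdjoint
  have hspec : spectrum ℝ p ⊆ {0, 1} := hp.isIdempotentElem.spectrum_subset ℝ
  have cfc_affine (c d : ℝ) : cfc (fun t : ℝ ↦ c * t + d * (1 - t)) p = c • p + d • (1 - p) := by
    rw [cfc_add .., cfc_const_mul .., cfc_const_mul .., cfc_sub .., cfc_id' ℝ p, cfc_const_one ℝ p]
  have hfin : (spectrum ℝ p).Finite := (toFinite {0, 1}).subset hspec
  rw [← cfc_affine a b, ← cfc_affine (f a) (f b), ← cfc_comp' f _ p ((hfin.image _).continuousOn _)]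
  refine cfc_congr fun t ht ↦ ?_
  rcases hspec ht with rfl | rfl <;> simp

theorem cfc_add_algebraMap (f : ℝ → ℝ) {a : 𝒜} (ha : IsSelfAdjoint a) (m : ℝ)
    (hf : ContinuousOn f ((· + m) '' spectrum ℝ a)) :
    cfc f (a + algebraMap ℝ 𝒜 m) = cfc (fun t ↦ f (t + m)) a := by
  rw [cfc_comp' f (· + m) a, cfc_add_const .., cfc_id' ℝ a]

variable [PartialOrder 𝒜] [StarOrderedRing 𝒜]

theorem algebraMap_inv_norm_ringInverse_le {a : 𝒜} (ha : IsStrictlyPositive a) :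
    algebraMap ℝ 𝒜 ‖Ring.inverse a‖⁻¹ ≤ a := by
  nontriviality 𝒜
  obtain ⟨u, rfl⟩ := ha.isUnit
  refine algebraMap_le_of_le_spectrum fun t ht ↦ ?_
  have hinv : t⁻¹ ∈ spectrum ℝ (Ring.inverse (u : 𝒜)) := by
    rw [Ring.inverse_unit]
    exact spectrum.inv₀_mem_inv_iff.2 ht
  exact inv_le_of_inv_le₀ (ha.spectrum_pos ht)
    ((le_abs_self _).trans (spectrum.norm_le_norm_of_mem hinv))

-- `0 ≤ η⁻¹ • (η • p - (1 - p)) * x * (η • p - (1 - p))` bounds the off-diagonal corners of `x`.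
theorem le_smul_conjugate_add_smul_conjugate {p x : 𝒜} (hp : IsSelfAdjoint p) (hx : 0 ≤ x) {η : ℝ}
    (hη : 0 < η) : x ≤ (1 + η) • (p * x * p) + (1 + η⁻¹) • ((1 - p) * x * (1 - p)) := by
  have hcross : 0 ≤ η⁻¹ • ((η • p - (1 - p)) * x * (η • p - (1 - p))) :=
    smul_nonneg (inv_nonneg.2 hη.le) <| IsSelfAdjoint.conjugate_nonneg hx <|
      ((IsSelfAdjoint.all η).smul hp).sub ((IsSelfAdjoint.one 𝒜).sub hp)
  refine (le_add_of_nonneg_right hcross).trans_eq ?_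
  simp only [mul_sub, sub_mul, mul_smul_comm, smul_mul_assoc, one_mul, mul_one]
  match_scalars <;> field_simp <;> ring

theorem conjugate_le_norm_smul {q x : 𝒜} (hq : IsStarProjection q) (hx : IsSelfAdjoint x) :
    q * x * q ≤ ‖x‖ • q := by
  simpa [hq.isSelfAdjoint.star_eq, hq.isIdempotentElem.eq] using
    CStarAlgebra.star_left_conjugate_le_norm_smul (a := q) hx

theorem eventually_le_smul_add_smul_one_sub {p x : 𝒜} (hp : IsStarProjection p) (hx : 0 ≤ x)
    {s t : ℝ} (hpx : p * x * p = s • p) (hst : s < t) :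
    ∀ᶠ M : ℝ in atTop, x ≤ t • p + M • (1 - p) := by
  obtain ⟨η, hη, hηt⟩ := exists_pos_mul_lt (sub_pos.2 hst) s
  filter_upwards [eventually_ge_atTop ((1 + η⁻¹) * ‖x‖)] with M hM
  have hp0 : 0 ≤ p := hp.nonneg
  have hq0 : 0 ≤ 1 - p := hp.one_sub.nonneg
  calc x ≤ (1 + η) • (p * x * p) + (1 + η⁻¹) • ((1 - p) * x * (1 - p)) :=
        le_smul_conjugate_add_smul_conjugate hp.isSelfAdjoint hx hη
    _ ≤ (1 + η) • (s • p) + (1 + η⁻¹) • (‖x‖ • (1 - p)) := by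
        rw [hpx]
        gcongr
        exact conjugate_le_norm_smul hp.one_sub (.of_nonneg hx)
    _ ≤ t • p + M • (1 - p) := by
        rw [smul_smul, smul_smul]
        gcongr
        linarith

theorem mul_eq_left_of_smul_le_smul {p r : 𝒜} (hp : 0 ≤ p) (hr : IsStarProjection r) {c d : ℝ}
    (hc : 0 < c) (hd : 0 < d) (h : c • p ≤ d • r) : p * r = p := by
  have hle : (d⁻¹ * c) • p ≤ r := by
    simpa [smul_smul, hd.ne'] using smul_le_smul_of_nonneg_left h (inv_nonneg.2 hd.le)
  have hcd : 0 < d⁻¹ * c := by positivity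
  have hmul := (hr.mul_right_and_mul_left_of_nonneg_of_le (smul_nonneg hcd.le hp) hle).1
  rwa [smul_mul_assoc, smul_right_inj hcd.ne'] at hmul

/-- `f` is operator monotone on `s` with respect to the C⋆-algebra `𝒜`: the continuous functional
calculus of `f` preserves the order of selfadjoint elements of `𝒜` with spectrum in `s`. The usual
notion, for operators on a Hilbert space `H`, is the case `𝒜 = H →L[ℂ] H`. -/
def OperatorMonotoneOn (𝒜 : Type*) [CStarAlgebra 𝒜] [PartialOrder 𝒜] (f : ℝ → ℝ) (s : Set ℝ) :
    Prop :=
  ∀ a b : 𝒜, IsSelfAdjoint a → IsSelfAdjoint b → spectrum ℝ a ⊆ s → spectrum ℝ b ⊆ s →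
    a ≤ b → cfc f a ≤ cfc f b

namespace OperatorMonotoneOn

theorem monotoneOn [Nontrivial 𝒜] {s : Set ℝ} (hf : OperatorMonotoneOn 𝒜 f s) :
    MonotoneOn f s := by
  intro a ha b hb hab
  have h := hf _ _ (.algebraMap 𝒜 (.all a)) (.algebraMap 𝒜 (.all b)) (by simpa using ha)
    (by simpa using hb) (algebraMap_mono 𝒜 hab)
  rwa [cfc_algebraMap, cfc_algebraMap, algebraMap_le_algebraMap] at h

theorem cfc_le_cfc (hf : OperatorMonotoneOn 𝒜 f (Ici 0)) {a b : 𝒜} (ha : 0 ≤ a) (hab : a ≤ b) :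
    cfc f a ≤ cfc f b :=
  hf a b (.of_nonneg ha) (.of_nonneg (ha.trans hab)) (fun _ ht ↦ spectrum_nonneg_of_nonneg ha ht)
    (fun _ ht ↦ spectrum_nonneg_of_nonneg (ha.trans hab) ht) hab

theorem eventually_cfc_le (hf : OperatorMonotoneOn 𝒜 f (Ici 0)) {p x : 𝒜}
    (hp : IsStarProjection p) (hx : 0 ≤ x) {s t : ℝ} (hpx : p * x * p = s • p) (hst : s < t) :
    ∀ᶠ M : ℝ in atTop, cfc f x ≤ f t • p + f M • (1 - p) := by
  filter_upwards [eventually_le_smul_add_smul_one_sub hp hx hpx hst] with M hM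
  simpa only [cfc_smul_add_smul_one_sub hp] using hf.cfc_le_cfc hx hM

theorem conjugate_cfc_le (hf : OperatorMonotoneOn 𝒜 f (Ici 0)) (hfc : ContinuousOn f (Ici 0))
    {p x : 𝒜} (hp : IsStarProjection p) (hx : 0 ≤ x) {s : ℝ} (hs : 0 ≤ s)
    (hpx : p * x * p = s • p) : p * cfc f x * p ≤ f s • p := by
  have hlim : Tendsto f (𝓝[>] s) (𝓝 (f s)) := (hfc s hs).mono (Ioi_subset_Ici hs)
  refine ge_of_tendsto (hlim.smul_const p) ?_
  filter_upwards [self_mem_nhdsWithin] with t hst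
  obtain ⟨M, hM⟩ := (hf.eventually_cfc_le hp hx hpx hst).exists
  simpa [mul_add, add_mul, hp.isIdempotentElem.eq, hp.isIdempotentElem.mul_one_sub_self] using
    hp.isSelfAdjoint.conjugate_le_conjugate hM

theorem cfc_le_of_eventually_eq (hf : OperatorMonotoneOn 𝒜 f (Ici 0))
    (hfc : ContinuousOn f (Ici 0)) {K : ℝ} (hK : ∀ᶠ M in atTop, f M = K) {p x : 𝒜}
    (hp : IsStarProjection p) (hx : 0 ≤ x) {s : ℝ} (hs : 0 ≤ s) (hpx : p * x * p = s • p) :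
    cfc f x ≤ f s • p + K • (1 - p) := by
  have hlim : Tendsto f (𝓝[>] s) (𝓝 (f s)) := (hfc s hs).mono (Ioi_subset_Ici hs)
  refine ge_of_tendsto ((hlim.smul_const p).add_const _) ?_
  filter_upwards [self_mem_nhdsWithin] with t hst
  obtain ⟨M, hM, hfM⟩ := ((hf.eventually_cfc_le hp hx hpx hst).and hK).exists
  rwa [hfM] at hM

variable {v : 𝒜}

theorem concaveOn (hf : OperatorMonotoneOn 𝒜 f (Ici 0)) (hfc : ContinuousOn f (Ici 0))
    (hv : IsOffDiagonalMatrixUnit v) (hv0 : v ≠ 0) : ConcaveOn ℝ (Ici 0) f := by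
  refine ⟨convex_Ici 0, fun a (ha : 0 ≤ a) b (hb : 0 ≤ b) w w' hw hw' hww' ↦ ?_⟩
  obtain rfl : w' = 1 - w := by linarith
  have hp := isStarProjection_star_mul_self hv.mul_star_mul_self
  have hp0 : star v * v ≠ 0 := (CStarRing.star_mul_self_ne_zero_iff v).2 hv0
  obtain ⟨r, hr, hprp⟩ := hv.exists_isStarProjection_mul_mul_eq_smul ⟨hw, sub_nonneg.1 hw'⟩
  have hx : 0 ≤ a • r + b • (1 - r) :=
    add_nonneg (smul_nonneg ha hr.nonneg) (smul_nonneg hb hr.one_sub.nonneg)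
  have hjensen := hf.conjugate_cfc_le hfc hp hx (by positivity)
    (mul_smul_add_smul_one_sub_mul hp.isIdempotentElem hprp a b)
  rwa [cfc_smul_add_smul_one_sub hr, mul_smul_add_smul_one_sub_mul hp.isIdempotentElem hprp,
    smul_le_smul_iff_of_pos_right (hp.nonneg.lt_of_ne' hp0)] at hjensen

theorem le_map_combo_of_eventually_eq (hf : OperatorMonotoneOn 𝒜 f (Ici 0))
    (hfc : ContinuousOn f (Ici 0)) (hv : IsOffDiagonalMatrixUnit v) (hv0 : v ≠ 0)
    {K : ℝ} (hK : ∀ᶠ M in atTop, f M = K) {a b w : ℝ} (ha : 0 ≤ a) (hab : a ≤ b) (hb : f b = K)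
    (hw0 : 0 ≤ w) (hw1 : w < 1) : K ≤ f (w * a + (1 - w) * b) := by
  have : Nontrivial 𝒜 := ⟨v, 0, hv0⟩
  have hp := isStarProjection_star_mul_self hv.mul_star_mul_self
  have hp0 : star v * v ≠ 0 := (CStarRing.star_mul_self_ne_zero_iff v).2 hv0
  obtain ⟨r, hr, hprp⟩ := hv.exists_isStarProjection_mul_mul_eq_smul ⟨hw0, hw1.le⟩
  set p := star v * v
  set s := w * a + (1 - w) * b
  have has : a ≤ s := by nlinarith
  have hx : 0 ≤ a • r + b • (1 - r) :=
    add_nonneg (smul_nonneg ha hr.nonneg) (smul_nonneg (ha.trans hab) hr.one_sub.nonneg)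
  have hle : f a • r + K • (1 - r) ≤ f s • p + K • (1 - p) := by
    simpa only [cfc_smul_add_smul_one_sub hr, hb] using hf.cfc_le_of_eventually_eq hfc hK hp hx
      (ha.trans has) (mul_smul_add_smul_one_sub_mul hp.isIdempotentElem hprp a b)
  have hgap : (K - f s) • p ≤ (K - f a) • r := by
    rw [← sub_nonneg] at hle ⊢
    convert hle using 1
    module
  by_contra! hsK
  have haK : f a < K := (hf.monotoneOn ha (ha.trans has) has).trans_lt hsK
  have hpr : p * r = p :=
    mul_eq_left_of_smul_le_smul hp.nonneg hr (sub_pos.2 hsK) (sub_pos.2 haK) hgap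
  have hwp : w • p = (1 : ℝ) • p := by rw [← hprp, hpr, hp.isIdempotentElem.eq, one_smul]
  exact hw1.ne (smul_left_injective ℝ hp0 hwp)

theorem eqOn_of_eventually_eq (hf : OperatorMonotoneOn 𝒜 f (Ici 0)) (hfc : ContinuousOn f (Ici 0))
    (hv : IsOffDiagonalMatrixUnit v) (hv0 : v ≠ 0) {K : ℝ} (hK : ∀ᶠ M in atTop, f M = K) :
    EqOn f (fun _ ↦ K) (Ici 0) := by
  have : Nontrivial 𝒜 := ⟨v, 0, hv0⟩
  intro a (ha : 0 ≤ a)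
  obtain ⟨b, hb, hab⟩ := (hK.and (eventually_ge_atTop a)).exists
  refine ((hf.monotoneOn ha (ha.trans hab) hab).trans_eq hb).antisymm ?_
  have hlim : Tendsto (fun w : ℝ ↦ w * a + (1 - w) * b) (𝓝[<] 1) (𝓝[≥] a) := by
    refine tendsto_nhdsWithin_iff.2
      ⟨tendsto_nhdsWithin_of_tendsto_nhds (Continuous.tendsto' (by fun_prop) _ _ (by ring)), ?_⟩
    filter_upwards [self_mem_nhdsWithin] with w (hw : w < 1)
    simp only [mem_Ici]
    nlinarith
  refine ge_of_tendsto (((hfc a ha).mono (Ici_subset_Ici.2 ha)).tendsto.comp hlim) ?_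
  filter_upwards [Ioo_mem_nhdsLT zero_lt_one] with w hw
  exact hf.le_map_combo_of_eventually_eq hfc hv hv0 hK ha hab hb hw.1.le hw.2

theorem strictMonoOn (hf : OperatorMonotoneOn 𝒜 f (Ici 0)) (hfc : ContinuousOn f (Ici 0))
    (hv : IsOffDiagonalMatrixUnit v) (hv0 : v ≠ 0)
    (hnc : ∃ x ∈ Ici (0 : ℝ), ∃ y ∈ Ici (0 : ℝ), f x ≠ f y) : StrictMonoOn f (Ici 0) := by
  have : Nontrivial 𝒜 := ⟨v, 0, hv0⟩
  intro a ha b hb hab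
  by_contra! hba
  have hconst : ∀ᶠ z in atTop, f z = f b := by
    filter_upwards [eventually_ge_atTop b] with z hbz
    have hz : z ∈ Ici (0 : ℝ) := le_trans hb hbz
    exact ((hf.concaveOn hfc hv hv0).right_le_of_le_left'' ha hz hab hbz hba).antisymm
      (hf.monotoneOn hb hz hbz)
  obtain ⟨x, hx, y, hy, hxy⟩ := hnc
  have heq := hf.eqOn_of_eventually_eq hfc hv hv0 hconst
  exact hxy ((heq hx).trans (heq hy).symm)

theorem algebraMap_add_sub_le_cfc_sub_cfc (hf : OperatorMonotoneOn 𝒜 f (Ici 0))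
    (hfc : ContinuousOn f (Ici 0)) (hconc : ConcaveOn ℝ (Ici 0) f) {a b : 𝒜} (hb : 0 ≤ b) {m : ℝ}
    (hm : 0 ≤ m) (hba : b + algebraMap ℝ 𝒜 m ≤ a) :
    algebraMap ℝ 𝒜 (f (‖b‖ + m) - f ‖b‖) ≤ cfc f a - cfc f b := by
  nontriviality 𝒜
  have hbsa : IsSelfAdjoint b := .of_nonneg hb
  have hspec {t : ℝ} (ht : t ∈ spectrum ℝ b) : 0 ≤ t := spectrum_nonneg_of_nonneg hb ht
  have hfb : ContinuousOn f (spectrum ℝ b) := hfc.mono fun _ ↦ hspec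
  have hmaps : MapsTo (· + m) (spectrum ℝ b) (Ici 0) := fun _ ht ↦ add_nonneg (hspec ht) hm
  have hfbm : ContinuousOn (fun t ↦ f (t + m)) (spectrum ℝ b) := hfc.comp (by fun_prop) hmaps
  calc algebraMap ℝ 𝒜 (f (‖b‖ + m) - f ‖b‖)
      ≤ cfc (fun t ↦ f (t + m) - f t) b := by
        refine algebraMap_le_cfc _ _ b fun t ht ↦ ?_
        exact antitoneOn_add_sub_of_concaveOn hconc hm ⟨hspec ht, hmaps ht⟩
          ⟨norm_nonneg b, add_nonneg (norm_nonneg b) hm⟩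
          ((le_abs_self t).trans (spectrum.norm_le_norm_of_mem ht))
    _ = cfc f (b + algebraMap ℝ 𝒜 m) - cfc f b := by
        rw [cfc_sub _ f b hfbm hfb, cfc_add_algebraMap f hbsa m (hfc.mono hmaps.image_subset)]
    _ ≤ cfc f a - cfc f b :=
        sub_le_sub_right (hf.cfc_le_cfc (add_nonneg hb (algebraMap_nonneg 𝒜 hm)) hba) _

end OperatorMonotoneOn

theorem stmt6_general {v : 𝒜} (hv : IsOffDiagonalMatrixUnit v) (hv0 : v ≠ 0)
    (hfc : ContinuousOn f (Ici 0)) (hf : OperatorMonotoneOn 𝒜 f (Ici 0))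
    (hnc : ∃ x ∈ Ici (0 : ℝ), ∃ y ∈ Ici (0 : ℝ), f x ≠ f y)
    {a b : 𝒜} (hb : 0 ≤ b) (hba : b ≤ a) (hab : IsUnit (a - b))
    {m : ℝ} (hm : m = ‖Ring.inverse (a - b)‖⁻¹) :
    (f (‖b‖ + m) - f ‖b‖) • (1 : 𝒜) ≤ cfc f a - cfc f b ∧
      0 < f (‖b‖ + m) - f ‖b‖ ∧ cfc f b ≤ cfc f a ∧ IsUnit (cfc f a - cfc f b) := by
  have : Nontrivial 𝒜 := ⟨v, 0, hv0⟩
  have hm0 : 0 < m := by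
    rw [hm, inv_pos, norm_pos_iff]
    exact hab.ringInverse.ne_zero
  have hgap : b + algebraMap ℝ 𝒜 m ≤ a := by
    rw [← le_sub_iff_add_le', hm]
    exact algebraMap_inv_norm_ringInverse_le (hab.isStrictlyPositive (sub_nonneg.2 hba))
  have hle := hf.algebraMap_add_sub_le_cfc_sub_cfc hfc (hf.concaveOn hfc hv hv0) hb hm0.le hgap
  have hpos : 0 < f (‖b‖ + m) - f ‖b‖ := sub_pos.2 <| hf.strictMonoOn hfc hv hv0 hnc
    (norm_nonneg b) (add_nonneg (norm_nonneg b) hm0.le) (lt_add_of_pos_right _ hm0)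
  rw [Algebra.algebraMap_eq_smul_one] at hle
  exact ⟨hle, hpos, hf.cfc_le_cfc hb hba,
    CStarAlgebra.isUnit_of_le _ hle (isStrictlyPositive_one.smul hpos)⟩

end CStarAlgebra

section HilbertSpace

open InnerProductSpace

theorem exists_norm_eq_one_inner_eq_zero {𝕜 E : Type*} [RCLike 𝕜] [NormedAddCommGroup E]
    [InnerProductSpace 𝕜 E] (hE : 1 < Module.rank 𝕜 E) :
    ∃ x y : E, ‖x‖ = 1 ∧ ‖y‖ = 1 ∧ inner 𝕜 x y = 0 := by
  let : NormedSpace ℝ E := .restrictScalars ℝ 𝕜 E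
  have : Nontrivial E := rank_pos_iff_nontrivial.1 (zero_lt_one.trans hE)
  obtain ⟨x, hx⟩ := exists_norm_eq E zero_le_one
  have hspan : (𝕜 ∙ x) ≠ ⊤ := by
    intro h
    have := rank_span_le (R := 𝕜) {x}
    rw [h, rank_top, Cardinal.mk_singleton] at this
    exact this.not_gt hE
  have : Nontrivial (𝕜 ∙ x)ᗮ :=
    Submodule.nontrivial_iff_ne_bot.2 (mt Submodule.orthogonal_eq_bot_iff.1 hspan)
  obtain ⟨y, hy⟩ := exists_norm_eq (𝕜 ∙ x)ᗮ zero_le_one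
  exact ⟨x, y, hx, hy, Submodule.mem_orthogonal_singleton_iff_inner_right.1 y.2⟩

theorem exists_isOffDiagonalMatrixUnit_ne_zero {𝕜 E : Type*} [RCLike 𝕜]
    [NormedAddCommGroup E] [InnerProductSpace 𝕜 E] [CompleteSpace E] (hE : 1 < Module.rank 𝕜 E) :
    ∃ v : E →L[𝕜] E, IsOffDiagonalMatrixUnit v ∧ v ≠ 0 := by
  obtain ⟨x, y, hx, hy, hxy⟩ := exists_norm_eq_one_inner_eq_zero hE
  have hx0 : x ≠ 0 := norm_ne_zero_iff.1 (by simp [hx])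
  have hy0 : y ≠ 0 := norm_ne_zero_iff.1 (by simp [hy])
  refine ⟨rankOne 𝕜 y x, ⟨?_, ?_⟩, rankOne_ne_zero hy0 hx0⟩
  · ext z
    simp [ContinuousLinearMap.star_eq_adjoint, hx, hy]
  · ext z
    simp [hxy]

end HilbertSpace

/-- Theorem B: if `f` is a non-constant operator monotone function on
`[0, ∞)` (for operators on an infinite-dimensional complex Hilbert space), `A ≥ B ≥ 0`
with `A - B` invertible and `m = ‖(A-B)⁻¹‖⁻¹`, then
`f(A) - f(B) ≥ (f(‖B‖+m) - f(‖B‖)) • I` with `f(‖B‖+m) - f(‖B‖) > 0`;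
in particular `f(A) > f(B)`. -/
theorem stmt6 {H : Type*} [NormedAddCommGroup H] [InnerProductSpace ℂ H] [CompleteSpace H]
    (hinf : ¬ FiniteDimensional ℂ H)
    (f : ℝ → ℝ) (hf : ContinuousOn f (Set.Ici (0 : ℝ)))
    (hmono : ∀ A B : H →L[ℂ] H, IsSelfAdjoint A → IsSelfAdjoint B →
      spectrum ℝ A ⊆ Set.Ici (0 : ℝ) → spectrum ℝ B ⊆ Set.Ici (0 : ℝ) →
      A ≤ B → cfc f A ≤ cfc f B)
    (hnc : ∃ x ∈ Set.Ici (0 : ℝ), ∃ y ∈ Set.Ici (0 : ℝ), f x ≠ f y)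
    (A B : H →L[ℂ] H) (hA : 0 ≤ A) (hB : 0 ≤ B) (hBA : B ≤ A) (hAB : IsUnit (A - B))
    (m : ℝ) (hm : m = ‖Ring.inverse (A - B)‖⁻¹) :
    (f (‖B‖ + m) - f ‖B‖) • (1 : H →L[ℂ] H) ≤ cfc f A - cfc f B ∧
    0 < f (‖B‖ + m) - f ‖B‖ ∧
    cfc f B ≤ cfc f A ∧ IsUnit (cfc f A - cfc f B) := by
  obtain ⟨v, hv, hv0⟩ := exists_isOffDiagonalMatrixUnit_ne_zero
    (Cardinal.one_lt_aleph0.trans_le (not_lt.1 (mt Module.rank_lt_aleph0_iff.1 hinf)))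
  exact stmt6_general hv hv0 hf hmono hnc hB hBA hAB hm
end

section
/- Let A and B be positive invertible bounded linear operators on a complex Hilbert space with A − B ≥ m·I for some m > 0, and let 0 < r ≤ 1, p ≥ 0, q ≥ 1 satisfy (1+r)q ≥ p + r ≥ qr. Then A^{(p+r)/q} − (A^{r/2} B^p A^{r/2})^{1/q} ≥ k(‖B‖, m, p, q, r) · m_A^r · I, where k(b, m, p, q, r) = (b + m)^{(p+r)/q − r} − b^{(p+r)/q − r} and m_A = ‖A⁻¹‖⁻¹ is the minimum of the spectrum of A. -/
/-!
Write `s = (p + r) / q - r ∈ [0, 1]` and `X = A^(r/2) B^(p/2)`. Furuta's identity turns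
`(X X⋆)^(1/q)` into `X (X⋆ X)^(1/q - 1) X⋆`. Since `B ≤ A`, the Löwner-Heinz inequality gives
`X⋆ X = B^(p/2) A^r B^(p/2) ≥ B^(p + r)`, and `1/q - 1 ∈ [-1, 0]` reverses this inequality, so that
`(A^(r/2) B^p A^(r/2))^(1/q) ≤ A^(r/2) B^s A^(r/2)`. The difference to be estimated is therefore at
least `A^(r/2) (A^s - B^s) A^(r/2)`. Here `A^s - B^s ≥ (B + m)^s - B^s`, and by concavity the
increment `(t + m)^s - t^s` is smallest on the spectrum of `B` at the right end `t = ‖B‖`.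

Furuta's identity needs `X` invertible; for singular `A` and `B` the operator inequality is obtained
from the one for `A + ε` and `B + ε` by letting `ε → 0`.
-/

open Filter Set Topology

namespace Furuta

theorem map_add_sub_map_le_of_concaveOn {D : Set ℝ} {f : ℝ → ℝ} (hf : ConcaveOn ℝ D f)
    {x y h : ℝ} (hx : x ∈ D) (hyh : y + h ∈ D) (hxy : x ≤ y) (hh : 0 ≤ h) :
    f (y + h) - f y ≤ f (x + h) - f x := by
  obtain rfl | hh := hh.eq_or_lt
  · simp only [add_zero, sub_self, le_refl]
  have hd : 0 < y + h - x := by linarith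
  set c := h / (y + h - x) with hc
  have hc0 : 0 ≤ c := by positivity
  have hc1 : 0 ≤ 1 - c := by rw [hc, sub_nonneg, div_le_one hd]; linarith
  have left_eq : (1 - c) * x + c * (y + h) = x + h := by rw [hc]; field_simp; ring
  have right_eq : c * x + (1 - c) * (y + h) = y := by rw [hc]; field_simp; ring
  have left_le := hf.2 hx hyh hc1 hc0 (by ring)
  have right_le := hf.2 hx hyh hc0 hc1 (by ring)
  simp only [smul_eq_mul, left_eq, right_eq] at left_le right_le
  linarith

variable {𝒜 : Type*} [CStarAlgebra 𝒜]

theorem cfc_unitary_conjugate (u : unitary 𝒜) {a : 𝒜} (ha : IsSelfAdjoint a) {f : ℝ → ℝ}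
    (hf : ContinuousOn f (spectrum ℝ a)) :
    cfc f (u * a * star (u : 𝒜)) = u * cfc f a * star (u : 𝒜) := by
  have hφ : Continuous (Unitary.conjStarAlgAut ℝ 𝒜 u) := by
    change Continuous fun y : 𝒜 => (u : 𝒜) * y * star (u : 𝒜)
    fun_prop
  simpa only [Unitary.conjStarAlgAut_apply] using
    (StarAlgHomClass.map_cfc (Unitary.conjStarAlgAut ℝ 𝒜 u) f a hf hφ ha (ha.map _)).symm

variable [PartialOrder 𝒜] [StarOrderedRing 𝒜]

theorem algebraMap_le_cfc_add_sub_cfc {f : ℝ → ℝ} (hf : ConcaveOn ℝ (Ici 0) f)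
    (hfc : ContinuousOn f (Ici 0)) {a : 𝒜} (ha : 0 ≤ a) {h : ℝ} (hh : 0 ≤ h) :
    algebraMap ℝ 𝒜 (f (‖a‖ + h) - f ‖a‖) ≤ cfc f (a + algebraMap ℝ 𝒜 h) - cfc f a := by
  nontriviality 𝒜
  have ht_nonneg : ∀ t ∈ spectrum ℝ a, 0 ≤ t := fun _ ht => spectrum_nonneg_of_nonneg ha ht
  have hth_nonneg : ∀ t ∈ spectrum ℝ a, 0 ≤ t + h := fun t ht =>
    add_nonneg (ht_nonneg t ht) hh
  have hf₀ : ContinuousOn f (spectrum ℝ a) := hfc.mono ht_nonneg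
  have hf₁ : ContinuousOn (fun t => f (t + h)) (spectrum ℝ a) :=
    hfc.comp (by fun_prop) hth_nonneg
  have shift : cfc f (a + algebraMap ℝ 𝒜 h) = cfc (fun t => f (t + h)) a := by
    rw [cfc_comp' f (· + h) a (hfc.mono (image_subset_iff.2 hth_nonneg)),
      cfc_add_const h (fun t => t) a, cfc_id' ℝ a]
  rw [shift, ← cfc_sub _ _ a hf₁ hf₀]
  refine algebraMap_le_cfc _ _ _ (fun t ht => ?_) (hf₁.sub hf₀)
  exact map_add_sub_map_le_of_concaveOn hf (ht_nonneg t ht)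
    (add_nonneg (norm_nonneg a) hh)
    ((Real.le_norm_self t).trans (spectrum.norm_le_norm_of_mem ht)) hh

theorem algebraMap_le_rpow_sub_rpow {a b : 𝒜} (hb : 0 ≤ b) {m s : ℝ} (hm : 0 ≤ m)
    (hab : algebraMap ℝ 𝒜 m ≤ a - b) (hs : s ∈ Icc 0 1) :
    algebraMap ℝ 𝒜 ((‖b‖ + m) ^ s - ‖b‖ ^ s) ≤ a ^ s - b ^ s := by
  have hbm : 0 ≤ b + algebraMap ℝ 𝒜 m := add_nonneg hb (algebraMap_nonneg 𝒜 hm)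
  calc algebraMap ℝ 𝒜 ((‖b‖ + m) ^ s - ‖b‖ ^ s)
      ≤ (b + algebraMap ℝ 𝒜 m) ^ s - b ^ s := by
        rw [CFC.rpow_eq_cfc_real hbm, CFC.rpow_eq_cfc_real hb]
        exact algebraMap_le_cfc_add_sub_cfc (Real.concaveOn_rpow hs.1 hs.2)
          (Real.continuous_rpow_const hs.1).continuousOn hb hm
    _ ≤ a ^ s - b ^ s := sub_le_sub_right (CFC.rpow_le_rpow hs (le_sub_iff_add_le'.1 hab)) _

theorem algebraMap_inv_norm_inverse_rpow_le {a : 𝒜} (ha : IsStrictlyPositive a) {r : ℝ}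
    (hr : 0 ≤ r) : algebraMap ℝ 𝒜 (‖Ring.inverse a‖⁻¹ ^ r) ≤ a ^ r := by
  nontriviality 𝒜
  rw [CFC.rpow_eq_cfc_real ha.nonneg]
  refine algebraMap_le_cfc _ _ _ (fun t ht => ?_) (Real.continuous_rpow_const hr).continuousOn
  have inv_le : t⁻¹ ≤ ‖Ring.inverse a‖ := by
    obtain ⟨u, rfl⟩ := ha.isUnit
    rw [Ring.inverse_unit]
    exact (Real.le_norm_self _).trans
      (spectrum.norm_le_norm_of_mem (spectrum.inv₀_mem_inv_iff.2 ht))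
  exact Real.rpow_le_rpow (by positivity) (inv_le_of_inv_le₀ (ha.spectrum_pos ht) inv_le) hr

theorem smul_one_le_rpow_conjugate {a b : 𝒜} (ha : IsStrictlyPositive a) {r k : ℝ} (hr : 0 ≤ r)
    (hk : 0 ≤ k) (hkb : algebraMap ℝ 𝒜 k ≤ b) :
    (k * ‖Ring.inverse a‖⁻¹ ^ r) • (1 : 𝒜) ≤ a ^ (r / 2) * b * a ^ (r / 2) := by
  calc (k * ‖Ring.inverse a‖⁻¹ ^ r) • (1 : 𝒜)
      = k • algebraMap ℝ 𝒜 (‖Ring.inverse a‖⁻¹ ^ r) := by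
        rw [Algebra.algebraMap_eq_smul_one, smul_smul]
    _ ≤ k • a ^ r := smul_le_smul_of_nonneg_left (algebraMap_inv_norm_inverse_rpow_le ha hr) hk
    _ = a ^ (r / 2) * algebraMap ℝ 𝒜 k * a ^ (r / 2) := by
        rw [← Algebra.commutes, mul_assoc, ← CFC.rpow_add ha.isUnit, add_halves, Algebra.smul_def]
    _ ≤ a ^ (r / 2) * b * a ^ (r / 2) := conjugate_le_conjugate_of_nonneg hkb CFC.rpow_nonneg

theorem rpow_le_rpow_of_exponent_nonpos {a b : 𝒜} (ha : IsStrictlyPositive a) (hab : a ≤ b)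
    {x : ℝ} (hx : x ∈ Icc (-1) 0) : b ^ x ≤ a ^ x := by
  have hb : IsStrictlyPositive b := ha.of_le hab
  obtain rfl | hx0 := eq_or_ne x 0
  · rw [CFC.rpow_zero a, CFC.rpow_zero b]
  have rpow_neg_le : a ^ (-x) ≤ b ^ (-x) :=
    CFC.rpow_le_rpow ⟨neg_nonneg.2 hx.2, neg_le.1 hx.1⟩ hab
  simpa only [CFC.inverse_rpow a _ (neg_ne_zero.2 hx0), CFC.inverse_rpow b _ (neg_ne_zero.2 hx0),
    neg_neg] using CStarAlgebra.ringInverse_le_ringInverse rpow_neg_le (ha.rpow a (-x))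

theorem star_rpow (a : 𝒜) (x : ℝ) : star (a ^ x) = a ^ x :=
  (IsSelfAdjoint.of_nonneg CFC.rpow_nonneg).star_eq

theorem isStrictlyPositive_star_mul_self {a : 𝒜} (ha : IsUnit a) :
    IsStrictlyPositive (star a * a) :=
  (ha.star.mul ha).isStrictlyPositive (star_mul_self_nonneg a)

-- This is the unitary factor in the polar decomposition of `a`.
theorem mul_rpow_neg_half_mem_unitary {a : 𝒜} (ha : IsUnit a) :
    a * (star a * a) ^ (-(1 / 2) : ℝ) ∈ unitary 𝒜 := by
  have hp := isStrictlyPositive_star_mul_self ha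
  set p := star a * a with hp_def
  set u := a * p ^ (-(1 / 2) : ℝ) with hu_def
  have star_mul_u : star u * u = 1 := by
    calc star u * u = p ^ (-(1 / 2) : ℝ) * p ^ (1 : ℝ) * p ^ (-(1 / 2) : ℝ) := by
          rw [hu_def, star_mul, star_rpow, CFC.rpow_one p, hp_def]; simp only [mul_assoc]
      _ = p ^ (0 : ℝ) := by
          rw [← CFC.rpow_add hp.isUnit, ← CFC.rpow_add hp.isUnit]; norm_num
      _ = 1 := CFC.rpow_zero p
  have hu : IsUnit u := ha.mul (hp.isUnit.cfcRpow _)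
  exact Unitary.mem_iff.2 ⟨star_mul_u, hu.mul_left_inj.1 <| by
    rw [mul_assoc, star_mul_u, mul_one, one_mul]⟩

theorem mul_star_self_rpow {a : 𝒜} (ha : IsUnit a) (x : ℝ) :
    (a * star a) ^ x = a * (star a * a) ^ (x - 1) * star a := by
  have hp := isStrictlyPositive_star_mul_self ha
  set p := star a * a
  set u : unitary 𝒜 := ⟨_, mul_rpow_neg_half_mem_unitary ha⟩
  have hu : (u : 𝒜) = a * p ^ (-(1 / 2) : ℝ) := rfl
  have conj_rpow (y : ℝ) : u * p ^ y * star (u : 𝒜) = a * p ^ (y - 1) * star a := by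
    calc u * p ^ y * star (u : 𝒜)
        = a * (p ^ (-(1 / 2) : ℝ) * p ^ y * p ^ (-(1 / 2) : ℝ)) * star a := by
          rw [hu, star_mul, star_rpow]; simp only [mul_assoc]
      _ = a * p ^ (y - 1) * star a := by
          rw [← CFC.rpow_add hp.isUnit, ← CFC.rpow_add hp.isUnit]; ring_nf
  have conj_self : u * p * star (u : 𝒜) = a * star a := by
    simpa only [CFC.rpow_one p, sub_self, CFC.rpow_zero p, mul_one] using conj_rpow 1
  have hcont : ContinuousOn (fun t : ℝ => t ^ x) (spectrum ℝ p) :=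
    continuousOn_id.rpow_const fun t ht => .inl (hp.spectrum_pos ht).ne'
  rw [← conj_rpow, CFC.rpow_eq_cfc_real (mul_star_self_nonneg a), CFC.rpow_eq_cfc_real hp.nonneg,
    ← conj_self, cfc_unitary_conjugate u hp.isSelfAdjoint hcont]

theorem rpow_add_le_conjugate_rpow {a b : 𝒜} (hb : IsStrictlyPositive b) (hba : b ≤ a) {r : ℝ}
    (hr : r ∈ Icc 0 1) (p : ℝ) : b ^ (p + r) ≤ b ^ (p / 2) * a ^ r * b ^ (p / 2) := by
  calc b ^ (p + r) = b ^ (p / 2) * b ^ r * b ^ (p / 2) := by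
        rw [← CFC.rpow_add hb.isUnit, ← CFC.rpow_add hb.isUnit]; ring_nf
    _ ≤ b ^ (p / 2) * a ^ r * b ^ (p / 2) :=
        conjugate_le_conjugate_of_nonneg (CFC.rpow_le_rpow hr hba) CFC.rpow_nonneg

theorem rpow_conjugate_rpow_le_of_isStrictlyPositive {a b : 𝒜} (hb : IsStrictlyPositive b)
    (hba : b ≤ a) {r x : ℝ} (hr : r ∈ Icc 0 1) (hx : x ∈ Icc 0 1) (p : ℝ) :
    (a ^ (r / 2) * b ^ p * a ^ (r / 2)) ^ x
      ≤ a ^ (r / 2) * b ^ ((p + r) * x - r) * a ^ (r / 2) := by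
  have ha : IsStrictlyPositive a := hb.of_le hba
  set y := a ^ (r / 2) * b ^ (p / 2) with hy_def
  have hy : IsUnit y := (ha.isUnit.cfcRpow _).mul (hb.isUnit.cfcRpow _)
  have hy_star : star y = b ^ (p / 2) * a ^ (r / 2) := by
    rw [hy_def, star_mul, star_rpow, star_rpow]
  have mul_star_y : y * star y = a ^ (r / 2) * b ^ p * a ^ (r / 2) := by
    rw [hy_star, hy_def, ← add_halves p, CFC.rpow_add hb.isUnit, add_halves]
    simp only [mul_assoc]
  have star_mul_y : star y * y = b ^ (p / 2) * a ^ r * b ^ (p / 2) := by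
    rw [hy_star, hy_def, ← add_halves r, CFC.rpow_add ha.isUnit, add_halves]
    simp only [mul_assoc]
  have hbx : (b ^ (p + r)) ^ (x - 1) = b ^ ((p + r) * (x - 1)) := by
    obtain h | h := eq_or_ne (p + r) 0
    · rw [h, zero_mul, CFC.rpow_zero b, CFC.one_rpow]
    · exact CFC.rpow_rpow b _ _ h
  have rpow_le : (star y * y) ^ (x - 1) ≤ b ^ ((p + r) * (x - 1)) := by
    rw [← hbx, star_mul_y]
    exact rpow_le_rpow_of_exponent_nonpos (hb.rpow b _) (rpow_add_le_conjugate_rpow hb hba hr p)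
      ⟨by linarith [hx.1], by linarith [hx.2]⟩
  calc (a ^ (r / 2) * b ^ p * a ^ (r / 2)) ^ x
      = y * (star y * y) ^ (x - 1) * star y := by rw [← mul_star_y, mul_star_self_rpow hy]
    _ ≤ y * b ^ ((p + r) * (x - 1)) * star y := star_right_conjugate_le_conjugate rpow_le y
    _ = a ^ (r / 2) * (b ^ (p / 2) * b ^ ((p + r) * (x - 1)) * b ^ (p / 2)) * a ^ (r / 2) := by
        rw [hy_star, hy_def]; simp only [mul_assoc]
    _ = a ^ (r / 2) * b ^ ((p + r) * x - r) * a ^ (r / 2) := by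
        rw [← CFC.rpow_add hb.isUnit, ← CFC.rpow_add hb.isUnit]; ring_nf

theorem continuousOn_rpow_of_exponent_nonneg {x : ℝ} (hx : 0 ≤ x) :
    ContinuousOn (· ^ x) {a : 𝒜 | 0 ≤ a} := by
  obtain rfl | hx := hx.eq_or_lt
  · exact continuousOn_const.congr CFC.rpow_zero_eqOn
  lift x to NNReal using hx.le
  simpa only [CFC.nnrpow_eq_rpow hx] using CFC.continuousOn_nnrpow (A := 𝒜) x

theorem tendsto_add_algebraMap_rpow {a : 𝒜} (ha : 0 ≤ a) {x : ℝ} (hx : 0 ≤ x) :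
    Tendsto (fun ε : ℝ => (a + algebraMap ℝ 𝒜 ε) ^ x) (𝓝[>] 0) (𝓝 (a ^ x)) := by
  have hcont : Continuous fun ε : ℝ => a + algebraMap ℝ 𝒜 ε :=
    continuous_const.add (continuous_algebraMap ℝ 𝒜)
  refine (continuousOn_rpow_of_exponent_nonneg hx a ha).tendsto.comp
    (tendsto_nhdsWithin_iff.2 ⟨?_, ?_⟩)
  · simpa only [map_zero, add_zero] using (hcont.tendsto 0).mono_left nhdsWithin_le_nhds
  · filter_upwards [self_mem_nhdsWithin] with ε hε
    exact add_nonneg ha (algebraMap_nonneg 𝒜 (le_of_lt hε))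

theorem rpow_conjugate_rpow_le {a b : 𝒜} (hb : 0 ≤ b) (hba : b ≤ a) {p r x : ℝ} (hp : 0 ≤ p)
    (hr : r ∈ Icc 0 1) (hx : x ∈ Icc 0 1) (hrx : r ≤ (p + r) * x) :
    (a ^ (r / 2) * b ^ p * a ^ (r / 2)) ^ x
      ≤ a ^ (r / 2) * b ^ ((p + r) * x - r) * a ^ (r / 2) := by
  have ha_lim := tendsto_add_algebraMap_rpow (hb.trans hba) (div_nonneg hr.1 zero_le_two)
  have hb_lim {y : ℝ} (hy : 0 ≤ y) := tendsto_add_algebraMap_rpow hb hy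
  have conj_nonneg (c d : 𝒜) : 0 ≤ c ^ (r / 2) * d ^ p * c ^ (r / 2) :=
    conjugate_nonneg_of_nonneg CFC.rpow_nonneg CFC.rpow_nonneg
  have lhs_lim := (continuousOn_rpow_of_exponent_nonneg hx.1 _ (conj_nonneg a b)).tendsto.comp <|
    tendsto_nhdsWithin_iff.2
      ⟨(ha_lim.mul (hb_lim hp)).mul ha_lim, .of_forall fun _ => conj_nonneg _ _⟩
  have rhs_lim := (ha_lim.mul (hb_lim (sub_nonneg.2 hrx))).mul ha_lim
  refine le_of_tendsto_of_tendsto lhs_lim rhs_lim ?_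
  filter_upwards [self_mem_nhdsWithin] with ε hε
  exact rpow_conjugate_rpow_le_of_isStrictlyPositive
    ((isStrictlyPositive_algebraMap hε).nonneg_add hb) (add_le_add_left hba _) hr hx p

end Furuta

open Furuta in
theorem stmt14_general {𝒜 : Type*} [CStarAlgebra 𝒜] [PartialOrder 𝒜] [StarOrderedRing 𝒜]
    {A B : 𝒜} (hA : IsUnit A) (hB : 0 ≤ B) {m : ℝ} (hm : 0 ≤ m) (hAB : m • (1 : 𝒜) ≤ A - B)
    {r p q : ℝ} (hr0 : 0 ≤ r) (hr1 : r ≤ 1) (hq : 1 ≤ q)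
    (h1 : p + r ≤ (1 + r) * q) (h2 : q * r ≤ p + r) :
    (((‖B‖ + m) ^ ((p + r) / q - r) - ‖B‖ ^ ((p + r) / q - r))
        * ‖Ring.inverse A‖⁻¹ ^ r) • (1 : 𝒜)
      ≤ A ^ ((p + r) / q) - (A ^ (r / 2) * B ^ p * A ^ (r / 2)) ^ (1 / q) := by
  have hq0 : 0 < q := by linarith
  have hp : 0 ≤ p := by linarith [le_mul_of_one_le_left hr0 hq]
  have hq_inv : 1 / q ∈ Icc 0 1 := ⟨by positivity, (div_le_one hq0).2 hq⟩
  set s := (p + r) / q - r with hs_def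
  have hrs : r ≤ (p + r) / q := (le_div_iff₀' hq0).2 h2
  have hs : s ∈ Icc 0 1 := ⟨sub_nonneg.2 hrs, sub_le_iff_le_add.2 ((div_le_iff₀ hq0).2 h1)⟩
  rw [← Algebra.algebraMap_eq_smul_one] at hAB
  have hBA : B ≤ A := sub_nonneg.1 ((algebraMap_nonneg 𝒜 hm).trans hAB)
  have hA_pos : IsStrictlyPositive A := hA.isStrictlyPositive (hB.trans hBA)
  set k := (‖B‖ + m) ^ s - ‖B‖ ^ s
  have hk : 0 ≤ k :=
    sub_nonneg.2 (Real.rpow_le_rpow (norm_nonneg B) (le_add_of_nonneg_right hm) hs.1)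
  have furuta : (A ^ (r / 2) * B ^ p * A ^ (r / 2)) ^ (1 / q)
      ≤ A ^ (r / 2) * B ^ s * A ^ (r / 2) := by
    simpa only [mul_one_div] using
      rpow_conjugate_rpow_le hB hBA hp ⟨hr0, hr1⟩ hq_inv (by rwa [mul_one_div])
  calc (k * ‖Ring.inverse A‖⁻¹ ^ r) • (1 : 𝒜)
      ≤ A ^ (r / 2) * (A ^ s - B ^ s) * A ^ (r / 2) :=
        smul_one_le_rpow_conjugate hA_pos hr0 hk (algebraMap_le_rpow_sub_rpow hB hm hAB hs)
    _ = A ^ ((p + r) / q) - A ^ (r / 2) * B ^ s * A ^ (r / 2) := by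
        rw [mul_sub, sub_mul, ← CFC.rpow_add hA, ← CFC.rpow_add hA, hs_def]; ring_nf
    _ ≤ A ^ ((p + r) / q) - (A ^ (r / 2) * B ^ p * A ^ (r / 2)) ^ (1 / q) :=
        sub_le_sub_left furuta _

/-- estimate of the Furuta inequality: if `A, B` are positive invertible
operators with `A - B ≥ m·I`, `m > 0`, `0 < r ≤ 1`, `p ≥ 0`, `q ≥ 1` and
`(1+r)q ≥ p + r ≥ qr`, then
`A^{(p+r)/q} - (A^{r/2} B^p A^{r/2})^{1/q} ≥ k(‖B‖, m, p, q, r) · m_A^r · I`, where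
`k(b, m, p, q, r) = (b+m)^{(p+r)/q - r} - b^{(p+r)/q - r}` and `m_A = ‖A⁻¹‖⁻¹`. -/
theorem stmt14 {H : Type*} [NormedAddCommGroup H] [InnerProductSpace ℂ H] [CompleteSpace H]
    (A B : H →L[ℂ] H) (hA : 0 ≤ A) (hB : 0 ≤ B) (hAu : IsUnit A) (hBu : IsUnit B)
    (m : ℝ) (hm : 0 < m) (hAB : m • (1 : H →L[ℂ] H) ≤ A - B)
    (r p q : ℝ) (hr0 : 0 < r) (hr1 : r ≤ 1) (hp : 0 ≤ p) (hq : 1 ≤ q)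
    (h1 : p + r ≤ (1 + r) * q) (h2 : q * r ≤ p + r) :
    (((‖B‖ + m) ^ ((p + r) / q - r) - ‖B‖ ^ ((p + r) / q - r))
        * ‖Ring.inverse A‖⁻¹ ^ r) • (1 : H →L[ℂ] H)
      ≤ cfc (fun t : ℝ => t ^ ((p + r) / q)) A
        - cfc (fun t : ℝ => t ^ (1 / q))
            (cfc (fun t : ℝ => t ^ (r / 2)) A * cfc (fun t : ℝ => t ^ p) B
              * cfc (fun t : ℝ => t ^ (r / 2)) A) := by
  have hnn : 0 ≤ A ^ (r / 2) * B ^ p * A ^ (r / 2) :=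
    conjugate_nonneg_of_nonneg CFC.rpow_nonneg CFC.rpow_nonneg
  rw [← CFC.rpow_eq_cfc_real hA, ← CFC.rpow_eq_cfc_real hA, ← CFC.rpow_eq_cfc_real hB,
    ← CFC.rpow_eq_cfc_real hnn]
  exact stmt14_general hAu hB hm.le hAB hr0.le hr1 hq h1 h2
end

section
/- Let A and B be positive invertible bounded linear operators on a complex Hilbert space with A − B ≥ m·I for some m > 0, and let p ≥ 1 and r ≥ 0. Then A^{1+r} − (A^{r/2} B^p A^{r/2})^{(1+r)/(p+r)} ≥ m · m_A^r · I, where m_A = ‖A⁻¹‖⁻¹ is the minimum of the spectrum of A. -/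
/-!
Conjugating `a - b ≥ m` by `a ^ (r / 2)` gives `a ^ (1 + r) - a ^ (r / 2) b a ^ (r / 2) ≥ m a ^ r`,
and `a ^ r ≥ ‖a⁻¹‖⁻¹ ^ r`, so it suffices to prove the satellite form of Furuta's inequality,
`(a ^ (r / 2) b ^ p a ^ (r / 2)) ^ ((1 + r) / (p + r)) ≤ a ^ (r / 2) b a ^ (r / 2)` for `0 ≤ b ≤ a`.
If `r ≤ 1`, write the inner operator as `x x*` with `x = a ^ (r / 2) b ^ (p / 2)`: the identity
`(x x*) ^ y = x (x* x) ^ (y - 1) x*` reduces the claim to the Löwner-Heinz inequality, applied once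
to `b ≤ a` and once, with an exponent in `[-1, 0]`, to `b ^ (p + r) ≤ x* x`. The case `r = 1`
applied to the pair `a ^ (1 + r)`, `(x x*) ^ ((1 + r) / (p + r))` passes from `r` to `2 r + 1`,
which reaches every `r ≥ 0`. Invertibility of `b` is removed by continuity.
-/

section Intertwining

variable {𝕜 A : Type*} {p : A → Prop} [RCLike 𝕜] [Ring A] [StarRing A] [Algebra 𝕜 A]
  [TopologicalSpace A] [ContinuousFunctionalCalculus 𝕜 A p] [IsSemitopologicalRing A] [T2Space A]

theorem semiconjBy_cfcHomSuperset {a b x : A} (ha : p a) (hb : p b) {s : Set 𝕜}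
    (hs : IsCompact s) (has : spectrum 𝕜 a ⊆ s) (hbs : spectrum 𝕜 b ⊆ s) (h : SemiconjBy x a b)
    (h_star : SemiconjBy x (star a) (star b)) (f : C(s, 𝕜)) :
    SemiconjBy x (cfcHomSuperset ha has f) (cfcHomSuperset hb hbs f) := by
  have : CompactSpace s := isCompact_iff_compactSpace.mp hs
  induction f using ContinuousMap.induction_on_of_compact with
  | const c =>
    have hconst {d : A} (hd : p d) (hds : spectrum 𝕜 d ⊆ s) :
        cfcHomSuperset hd hds (.const s c) = algebraMap 𝕜 A c :=
      AlgHomClass.commutes (cfcHomSuperset hd hds) c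
    rw [hconst, hconst]
    exact (Algebra.commutes c x).symm
  | id => rwa [cfcHomSuperset_id, cfcHomSuperset_id]
  | star_id => rwa [map_star, map_star, cfcHomSuperset_id, cfcHomSuperset_id]
  | add f g hf hg => rw [map_add, map_add]; exact hf.add_right hg
  | mul f g hf hg => rw [map_mul, map_mul]; exact hf.mul_right hg
  | frequently f hf =>
    exact hf.mem_of_closed <| isClosed_eq
      ((cfcHomSuperset_continuous ha has).const_mul x)
      ((cfcHomSuperset_continuous hb hbs).mul_const x)

theorem semiconjBy_cfc {a b x : A} (ha : p a) (hb : p b) (h : SemiconjBy x a b)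
    (h_star : SemiconjBy x (star a) (star b)) {f : 𝕜 → 𝕜} (hfa : ContinuousOn f (spectrum 𝕜 a))
    (hfb : ContinuousOn f (spectrum 𝕜 b)) : SemiconjBy x (cfc f a) (cfc f b) := by
  have ha_compact := ContinuousFunctionalCalculus.isCompact_spectrum (R := 𝕜) a
  have hb_compact := ContinuousFunctionalCalculus.isCompact_spectrum (R := 𝕜) b
  have hf : ContinuousOn f (spectrum 𝕜 a ∪ spectrum 𝕜 b) :=
    hfa.union_of_isClosed hfb ha_compact.isClosed hb_compact.isClosed
  rw [cfc_apply f a, cfc_apply f b]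
  exact semiconjBy_cfcHomSuperset ha hb (ha_compact.union hb_compact) Set.subset_union_left
    Set.subset_union_right h h_star ⟨_, hf.domRestrict⟩

end Intertwining

section Rpow

variable {A : Type*} [CStarAlgebra A] [PartialOrder A] [StarOrderedRing A]

lemma isSelfAdjoint_rpow (a : A) (y : ℝ) : IsSelfAdjoint (a ^ y) :=
  .of_nonneg CFC.rpow_nonneg

lemma rpow_rpow_of_isStrictlyPositive {a : A} (ha : IsStrictlyPositive a) (x y : ℝ) :
    (a ^ x) ^ y = a ^ (x * y) := by
  rcases eq_or_ne x 0 with rfl | hx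
  · rw [CFC.rpow_zero a ha.nonneg, CFC.one_rpow, zero_mul, CFC.rpow_zero a ha.nonneg]
  · exact CFC.rpow_rpow a x y hx ha

lemma continuousOn_rpow_const {X : Type*} [TopologicalSpace X] {f : X → A} {s : Set X}
    (hf : ContinuousOn f s) (hf_nonneg : ∀ x ∈ s, 0 ≤ f x) {y : ℝ} (hy : 0 ≤ y) :
    ContinuousOn (fun x ↦ f x ^ y) s :=
  hf.cfc_nnreal_of_mem_nhdsSet _ Filter.univ_mem hf_nonneg
    (NNReal.continuous_rpow_const hy).continuousOn

lemma semiconjBy_rpow {a b x : A} (ha : IsStrictlyPositive a) (hb : IsStrictlyPositive b)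
    (h : SemiconjBy x a b) (y : ℝ) : SemiconjBy x (a ^ y) (b ^ y) := by
  have hcont {c : A} (hc : IsStrictlyPositive c) :
      ContinuousOn (fun t : ℝ ↦ t ^ y) (spectrum ℝ c) :=
    continuousOn_id.rpow_const fun t ht ↦ .inl (hc.spectrum_pos ht).ne'
  rw [CFC.rpow_eq_cfc_real ha.nonneg, CFC.rpow_eq_cfc_real hb.nonneg]
  refine semiconjBy_cfc ha.isSelfAdjoint hb.isSelfAdjoint h ?_ (hcont ha) (hcont hb)
  rwa [ha.isSelfAdjoint.star_eq, hb.isSelfAdjoint.star_eq]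

lemma mul_star_rpow {x : A} (hx : IsUnit x) (y : ℝ) :
    (x * star x) ^ y = x * (star x * x) ^ (y - 1) * star x := by
  have hl : IsStrictlyPositive (x * star x) :=
    CStarAlgebra.isStrictlyPositive_iff_eq_mul_star_self.mpr ⟨x, hx, rfl⟩
  have hr : IsStrictlyPositive (star x * x) :=
    CStarAlgebra.isStrictlyPositive_iff_eq_star_mul_self.mpr ⟨x, hx, rfl⟩
  have h : SemiconjBy x (star x * x) (x * star x) := (mul_assoc x (star x) x).symm
  calc (x * star x) ^ y = (x * star x) ^ (y - 1) * (x * star x) ^ (1 : ℝ) := by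
        rw [← CFC.rpow_add hl.isUnit, sub_add_cancel]
    _ = (x * star x) ^ (y - 1) * x * star x := by rw [CFC.rpow_one _ hl.nonneg, ← mul_assoc]
    _ = x * (star x * x) ^ (y - 1) * star x := by rw [(semiconjBy_rpow hr hl h _).eq]

lemma rpow_le_rpow_of_mem_Icc_neg_one_zero {a b : A} (ha : IsStrictlyPositive a) (hab : a ≤ b)
    {y : ℝ} (hy : y ∈ Set.Icc (-1) 0) : b ^ y ≤ a ^ y := by
  have h := CStarAlgebra.rpow_neg_one_le_rpow_neg_one
    (CFC.rpow_le_rpow (p := -y) ⟨by linarith [hy.2], by linarith [hy.1]⟩ hab) (ha.rpow a (-y))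
  simpa only [rpow_rpow_of_isStrictlyPositive, ha, ha.of_le hab, mul_neg_one, neg_neg] using h

lemma rpow_smul_one_le_rpow {a : A} {c : ℝ} (hc : 0 ≤ c) (hca : c • (1 : A) ≤ a) {y : ℝ}
    (hy : 0 ≤ y) : (c ^ y) • (1 : A) ≤ a ^ y := by
  have ha : 0 ≤ a := (smul_nonneg hc zero_le_one).trans hca
  rw [← Algebra.algebraMap_eq_smul_one] at hca ⊢
  have hspec : ∀ t ∈ spectrum ℝ a, c ≤ t := (algebraMap_le_iff_le_spectrum ha.isSelfAdjoint).mp hca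
  rw [CFC.rpow_eq_cfc_real ha]
  exact algebraMap_le_cfc _ _ _ (fun t ht ↦ Real.rpow_le_rpow hc (hspec t ht) hy)
    (continuousOn_id.rpow_const fun _ _ ↦ .inr hy) ha.isSelfAdjoint

end Rpow

section Sandwich

variable {A : Type*} [CStarAlgebra A] [PartialOrder A] [StarOrderedRing A] {a b : A}

lemma conj_rpow_le_conj_rpow {c d : A} (hcd : c ≤ d) (a : A) (x : ℝ) :
    a ^ x * c * a ^ x ≤ a ^ x * d * a ^ x :=
  conjugate_le_conjugate_of_nonneg hcd CFC.rpow_nonneg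

lemma isStrictlyPositive_conj_rpow (ha : IsStrictlyPositive a) (hb : IsStrictlyPositive b)
    (x : ℝ) : IsStrictlyPositive (a ^ x * b * a ^ x) :=
  IsStrictlyPositive.iff_of_unital.mpr ⟨conjugate_nonneg_of_nonneg hb.nonneg CFC.rpow_nonneg,
    ((ha.rpow a x).isUnit.mul hb.isUnit).mul (ha.rpow a x).isUnit⟩

lemma conj_rpow_half_conj_rpow_half (ha : IsUnit a) (c : A) (x y : ℝ) :
    a ^ (x / 2) * (a ^ (y / 2) * c * a ^ (y / 2)) * a ^ (x / 2) =
      a ^ ((x + y) / 2) * c * a ^ ((x + y) / 2) := by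
  have hleft : a ^ (x / 2) * a ^ (y / 2) = a ^ ((x + y) / 2) := by
    rw [← CFC.rpow_add ha, ← add_div]
  have hright : a ^ (y / 2) * a ^ (x / 2) = a ^ ((x + y) / 2) := by
    rw [← CFC.rpow_add ha, ← add_div, add_comm y x]
  calc a ^ (x / 2) * (a ^ (y / 2) * c * a ^ (y / 2)) * a ^ (x / 2)
      = (a ^ (x / 2) * a ^ (y / 2)) * c * (a ^ (y / 2) * a ^ (x / 2)) := by
        simp only [mul_assoc]
    _ = a ^ ((x + y) / 2) * c * a ^ ((x + y) / 2) := by rw [hleft, hright]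

lemma conj_rpow_half_rpow (ha : IsUnit a) (x y : ℝ) :
    a ^ (x / 2) * a ^ y * a ^ (x / 2) = a ^ (x + y) := by
  rw [← CFC.rpow_add ha, ← CFC.rpow_add ha]
  ring_nf

lemma conj_rpow_half_self (ha : IsStrictlyPositive a) (x : ℝ) :
    a ^ (x / 2) * a * a ^ (x / 2) = a ^ (x + 1) := by
  rw [← conj_rpow_half_rpow ha.isUnit, CFC.rpow_one a ha.nonneg]

lemma conj_rpow_half_rpow_eq_conj_conj (ha : IsStrictlyPositive a) (hb : IsStrictlyPositive b)
    (r p y : ℝ) :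
    (a ^ (r / 2) * b ^ p * a ^ (r / 2)) ^ y =
      a ^ (r / 2) * (b ^ (p / 2) * (b ^ (p / 2) * a ^ r * b ^ (p / 2)) ^ (y - 1) * b ^ (p / 2)) *
        a ^ (r / 2) := by
  have hsplit {c : A} (hc : IsStrictlyPositive c) (x : ℝ) :
      c ^ x = c ^ (x / 2) * c ^ (x / 2) := by
    rw [← CFC.rpow_add hc.isUnit, add_halves]
  have h := mul_star_rpow ((ha.rpow a (r / 2)).isUnit.mul (hb.rpow b (p / 2)).isUnit) y
  simpa only [star_mul, (isSelfAdjoint_rpow _ _).star_eq, hsplit ha r, hsplit hb p,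
    mul_assoc] using h

lemma norm_inverse_inv_smul_one_le (ha : IsStrictlyPositive a) :
    ‖Ring.inverse a‖⁻¹ • (1 : A) ≤ a := by
  rcases (norm_nonneg (Ring.inverse a)).eq_or_lt' with hzero | hpos
  · rw [hzero, inv_zero, zero_smul]
    exact ha.nonneg
  rw [inv_smul_le_iff_of_pos hpos]
  have hle : a ^ (-1 : ℝ) ≤ ‖Ring.inverse a‖ • (1 : A) := by
    rw [← CFC.inverse_eq_rpow_neg_one ha, ← Algebra.algebraMap_eq_smul_one]
    exact ha.ringInverse.isSelfAdjoint.le_algebraMap_norm_self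
  calc (1 : A) = a ^ ((1 : ℝ) / 2) * a ^ (-1 : ℝ) * a ^ ((1 : ℝ) / 2) := by
        rw [conj_rpow_half_rpow ha.isUnit, add_neg_cancel, CFC.rpow_zero a ha.nonneg]
    _ ≤ a ^ ((1 : ℝ) / 2) * (‖Ring.inverse a‖ • (1 : A)) * a ^ ((1 : ℝ) / 2) :=
        conj_rpow_le_conj_rpow hle a _
    _ = ‖Ring.inverse a‖ • a := by
        rw [mul_smul_comm, smul_mul_assoc, mul_one, ← CFC.rpow_add ha.isUnit, add_halves,
          CFC.rpow_one a ha.nonneg]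

end Sandwich

section Furuta

open Set

variable {A : Type*} [CStarAlgebra A] [PartialOrder A] [StarOrderedRing A] {a b : A} {p r : ℝ}

lemma conj_rpow_rpow_le_conj_of_le_one (hb : IsStrictlyPositive b) (hba : b ≤ a) (hp : 1 ≤ p)
    (hr : r ∈ Icc 0 1) :
    (a ^ (r / 2) * b ^ p * a ^ (r / 2)) ^ ((1 + r) / (p + r)) ≤
      a ^ (r / 2) * b * a ^ (r / 2) := by
  have ha : IsStrictlyPositive a := hb.of_le hba
  have hpr : 0 < p + r := by linarith [hr.1]
  have hexp : (1 + r) / (p + r) - 1 ∈ Icc (-1) 0 := by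
    have hpos : 0 ≤ (1 + r) / (p + r) := div_nonneg (by linarith [hr.1]) hpr.le
    have hle : (1 + r) / (p + r) ≤ 1 := (div_le_one hpr).mpr (by linarith)
    exact ⟨by linarith, by linarith⟩
  have hbase : b ^ (p + r) ≤ b ^ (p / 2) * a ^ r * b ^ (p / 2) :=
    (conj_rpow_half_rpow hb.isUnit p r).symm.trans_le
      (conj_rpow_le_conj_rpow (CFC.rpow_le_rpow hr hba) b _)
  have hinv : (b ^ (p / 2) * a ^ r * b ^ (p / 2)) ^ ((1 + r) / (p + r) - 1) ≤ b ^ (1 - p) := by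
    calc _ ≤ (b ^ (p + r)) ^ ((1 + r) / (p + r) - 1) :=
          rpow_le_rpow_of_mem_Icc_neg_one_zero (hb.rpow b (p + r)) hbase hexp
      _ = b ^ (1 - p) := by
          rw [rpow_rpow_of_isStrictlyPositive hb]
          congr 1
          field_simp
          ring
  calc _ = a ^ (r / 2) * (b ^ (p / 2) * (b ^ (p / 2) * a ^ r * b ^ (p / 2)) ^
          ((1 + r) / (p + r) - 1) * b ^ (p / 2)) * a ^ (r / 2) :=
        conj_rpow_half_rpow_eq_conj_conj ha hb r p _
    _ ≤ a ^ (r / 2) * (b ^ (p / 2) * b ^ (1 - p) * b ^ (p / 2)) * a ^ (r / 2) :=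
        conj_rpow_le_conj_rpow (conj_rpow_le_conj_rpow hinv b _) a _
    _ = a ^ (r / 2) * b * a ^ (r / 2) := by
        rw [conj_rpow_half_rpow hb.isUnit, add_sub_cancel, CFC.rpow_one b hb.nonneg]

lemma conj_rpow_rpow_le_conj_two_mul_add_one (hb : IsStrictlyPositive b) (hba : b ≤ a)
    (hp : 1 ≤ p) (hr : 0 ≤ r)
    (h : (a ^ (r / 2) * b ^ p * a ^ (r / 2)) ^ ((1 + r) / (p + r)) ≤
      a ^ (r / 2) * b * a ^ (r / 2)) :
    (a ^ ((2 * r + 1) / 2) * b ^ p * a ^ ((2 * r + 1) / 2)) ^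
        ((1 + (2 * r + 1)) / (p + (2 * r + 1))) ≤
      a ^ ((2 * r + 1) / 2) * b * a ^ ((2 * r + 1) / 2) := by
  have ha : IsStrictlyPositive a := hb.of_le hba
  have hr1 : 0 < 1 + r := by linarith
  have hpr : 0 < p + r := by linarith
  set c := a ^ (r / 2) * b ^ p * a ^ (r / 2) with hc_def
  have hc : IsStrictlyPositive c := isStrictlyPositive_conj_rpow ha (hb.rpow b p) _
  have hle : c ^ ((1 + r) / (p + r)) ≤ a ^ (1 + r) := by
    rw [add_comm 1 r, ← conj_rpow_half_self ha, add_comm r 1]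
    exact h.trans (conj_rpow_le_conj_rpow hba a _)
  have hconj (d : A) : (a ^ (1 + r)) ^ ((1 : ℝ) / 2) * (a ^ (r / 2) * d * a ^ (r / 2)) *
      (a ^ (1 + r)) ^ ((1 : ℝ) / 2) = a ^ ((2 * r + 1) / 2) * d * a ^ ((2 * r + 1) / 2) := by
    rw [rpow_rpow_of_isStrictlyPositive ha, mul_one_div,
      conj_rpow_half_conj_rpow_half ha.isUnit, show 1 + r + r = 2 * r + 1 by ring]
  have hcancel : (c ^ ((1 + r) / (p + r))) ^ ((p + r) / (1 + r)) = c := by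
    rw [rpow_rpow_of_isStrictlyPositive hc, div_mul_div_cancel₀ hpr.ne', div_self hr1.ne',
      CFC.rpow_one c hc.nonneg]
  have hexp : (1 + (2 * r + 1)) / (p + (2 * r + 1)) = (1 + 1) / ((p + r) / (1 + r) + 1) := by
    field_simp
    ring
  have hstep := conj_rpow_rpow_le_conj_of_le_one (p := (p + r) / (1 + r)) (hc.rpow c _) hle
    ((one_le_div hr1).mpr (by linarith)) (right_mem_Icc.mpr zero_le_one)
  rw [hcancel, hc_def, hconj, ← hexp] at hstep
  calc _ ≤ _ := hstep
    _ ≤ (a ^ (1 + r)) ^ ((1 : ℝ) / 2) * (a ^ (r / 2) * b * a ^ (r / 2)) *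
          (a ^ (1 + r)) ^ ((1 : ℝ) / 2) := conj_rpow_le_conj_rpow h _ _
    _ = a ^ ((2 * r + 1) / 2) * b * a ^ ((2 * r + 1) / 2) := hconj b

lemma conj_rpow_rpow_le_conj_of_isStrictlyPositive (hb : IsStrictlyPositive b) (hba : b ≤ a)
    (hp : 1 ≤ p) (hr : 0 ≤ r) :
    (a ^ (r / 2) * b ^ p * a ^ (r / 2)) ^ ((1 + r) / (p + r)) ≤
      a ^ (r / 2) * b * a ^ (r / 2) := by
  obtain ⟨n, hn⟩ := pow_unbounded_of_one_lt (1 + r) one_lt_two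
  induction n generalizing r with
  | zero => linarith [pow_zero (2 : ℝ)]
  | succ n ih =>
    rcases le_or_gt r 1 with hr1 | hr1
    · exact conj_rpow_rpow_le_conj_of_le_one hb hba hp ⟨hr, hr1⟩
    · obtain ⟨s, rfl⟩ : ∃ s, r = 2 * s + 1 := ⟨(r - 1) / 2, by ring⟩
      have hs : 0 ≤ s := by linarith
      exact conj_rpow_rpow_le_conj_two_mul_add_one hb hba hp hs
        (ih hs (by rw [pow_succ] at hn; linarith))

theorem conj_rpow_rpow_le_conj (hb : 0 ≤ b) (hba : b ≤ a) (hp : 1 ≤ p) (hr : 0 ≤ r) :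
    (a ^ (r / 2) * b ^ p * a ^ (r / 2)) ^ ((1 + r) / (p + r)) ≤
      a ^ (r / 2) * b * a ^ (r / 2) := by
  let shift (c : A) (ε : ℝ) : A := c + ε • 1
  have hshift_zero (c : A) : shift c 0 = c := by simp only [shift, zero_smul, add_zero]
  have hshift_cont (c : A) : ContinuousOn (shift c) (Ici 0) := by fun_prop
  have hshift_nonneg {c : A} (hc : 0 ≤ c) : ∀ ε ∈ Ici (0 : ℝ), 0 ≤ shift c ε :=
    fun ε hε ↦ add_nonneg hc (smul_nonneg hε zero_le_one)
  have hshift_pos : ∀ ε ∈ Ioi (0 : ℝ), IsStrictlyPositive (shift b ε) := fun ε hε ↦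
    .nonneg_add hb (isStrictlyPositive_one.smul hε)
  have ha_cont : ContinuousOn (fun ε ↦ shift a ε ^ (r / 2)) (Ici 0) :=
    continuousOn_rpow_const (hshift_cont a) (hshift_nonneg (hb.trans hba))
      (div_nonneg hr zero_le_two)
  have hb_cont : ContinuousOn (fun ε ↦ shift b ε ^ p) (Ici 0) :=
    continuousOn_rpow_const (hshift_cont b) (hshift_nonneg hb) (zero_le_one.trans hp)
  have hleft : ContinuousOn (fun ε ↦ (shift a ε ^ (r / 2) * shift b ε ^ p * shift a ε ^ (r / 2)) ^
      ((1 + r) / (p + r))) (Ici 0) :=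
    continuousOn_rpow_const ((ha_cont.mul hb_cont).mul ha_cont)
      (fun _ _ ↦ conjugate_nonneg_of_nonneg CFC.rpow_nonneg CFC.rpow_nonneg)
      (div_nonneg (by linarith) (by linarith))
  have hright : ContinuousOn (fun ε ↦ shift a ε ^ (r / 2) * shift b ε * shift a ε ^ (r / 2))
      (Ici 0) := (ha_cont.mul (hshift_cont b)).mul ha_cont
  have hlim := ContinuousWithinAt.closure_le (s := Ioi (0 : ℝ)) (x := 0)
    (by rw [closure_Ioi]; exact self_mem_Ici) ((hleft 0 self_mem_Ici).mono Ioi_subset_Ici_self)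
    ((hright 0 self_mem_Ici).mono Ioi_subset_Ici_self)
    fun ε hε ↦ conj_rpow_rpow_le_conj_of_isStrictlyPositive (hshift_pos ε hε)
      (by simpa only [shift, add_le_add_iff_right] using hba) hp hr
  simpa only [hshift_zero] using hlim

lemma smul_one_le_rpow_sub_conj (ha : IsStrictlyPositive a) {m : ℝ} (hm : 0 ≤ m)
    (hab : m • (1 : A) ≤ a - b) (hr : 0 ≤ r) :
    (m * ‖Ring.inverse a‖⁻¹ ^ r) • (1 : A) ≤ a ^ (1 + r) - a ^ (r / 2) * b * a ^ (r / 2) := by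
  have hle : ‖Ring.inverse a‖⁻¹ ^ r • (1 : A) ≤ a ^ r :=
    rpow_smul_one_le_rpow (by positivity) (norm_inverse_inv_smul_one_le ha) hr
  calc (m * ‖Ring.inverse a‖⁻¹ ^ r) • (1 : A) = m • ‖Ring.inverse a‖⁻¹ ^ r • (1 : A) :=
        mul_smul _ _ _
    _ ≤ m • a ^ r := smul_le_smul_of_nonneg_left hle hm
    _ = a ^ (r / 2) * (m • 1) * a ^ (r / 2) := by
        rw [mul_smul_comm, smul_mul_assoc, mul_one, ← CFC.rpow_add ha.isUnit, add_halves]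
    _ ≤ a ^ (r / 2) * (a - b) * a ^ (r / 2) := conj_rpow_le_conj_rpow hab a _
    _ = a ^ (1 + r) - a ^ (r / 2) * b * a ^ (r / 2) := by
        rw [mul_sub, sub_mul, conj_rpow_half_self ha, add_comm r 1]

end Furuta

theorem stmt15_general {A : Type*} [CStarAlgebra A] [PartialOrder A] [StarOrderedRing A]
    {a b : A} (hb : 0 ≤ b) {m : ℝ} (hm : 0 < m) (hab : m • (1 : A) ≤ a - b)
    {p r : ℝ} (hp : 1 ≤ p) (hr : 0 ≤ r) :
    (m * ‖Ring.inverse a‖⁻¹ ^ r) • (1 : A)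
      ≤ cfc (fun t : ℝ => t ^ (1 + r)) a
        - cfc (fun t : ℝ => t ^ ((1 + r) / (p + r)))
            (cfc (fun t : ℝ => t ^ (r / 2)) a * cfc (fun t : ℝ => t ^ p) b
              * cfc (fun t : ℝ => t ^ (r / 2)) a) := by
  have hgap : IsStrictlyPositive (a - b) := (isStrictlyPositive_one.smul hm).of_le hab
  have hba : b ≤ a := sub_nonneg.mp hgap.nonneg
  have ha : IsStrictlyPositive a := hgap.of_le (sub_le_self a hb)
  have hsandwich : 0 ≤ a ^ (r / 2) * b ^ p * a ^ (r / 2) :=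
    conjugate_nonneg_of_nonneg CFC.rpow_nonneg CFC.rpow_nonneg
  rw [← CFC.rpow_eq_cfc_real ha.nonneg, ← CFC.rpow_eq_cfc_real ha.nonneg,
    ← CFC.rpow_eq_cfc_real hb, ← CFC.rpow_eq_cfc_real hsandwich]
  exact (smul_one_le_rpow_sub_conj ha hm.le hab hr).trans
    (sub_le_sub_left (conj_rpow_rpow_le_conj hb hba hp hr) _)

/-- optimal case of the Furuta-type estimate: if `A, B` are positive
invertible operators with `A - B ≥ m·I`, `m > 0`, `p ≥ 1` and `r ≥ 0`, then
`A^{1+r} - (A^{r/2} B^p A^{r/2})^{(1+r)/(p+r)} ≥ m · m_A^r · I`, where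
`m_A = ‖A⁻¹‖⁻¹`. -/
theorem stmt15 {H : Type*} [NormedAddCommGroup H] [InnerProductSpace ℂ H] [CompleteSpace H]
    (A B : H →L[ℂ] H) (hA : 0 ≤ A) (hB : 0 ≤ B) (hAu : IsUnit A) (hBu : IsUnit B)
    (m : ℝ) (hm : 0 < m) (hAB : m • (1 : H →L[ℂ] H) ≤ A - B)
    (p r : ℝ) (hp : 1 ≤ p) (hr : 0 ≤ r) :
    (m * ‖Ring.inverse A‖⁻¹ ^ r) • (1 : H →L[ℂ] H)
      ≤ cfc (fun t : ℝ => t ^ (1 + r)) A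
        - cfc (fun t : ℝ => t ^ ((1 + r) / (p + r)))
            (cfc (fun t : ℝ => t ^ (r / 2)) A * cfc (fun t : ℝ => t ^ p) B
              * cfc (fun t : ℝ => t ^ (r / 2)) A) :=
  stmt15_general hB hm hAB hp hr
end

section
/- Let A and B be positive invertible bounded linear operators on a complex Hilbert space with A ≥ B and A − B invertible. Then log A − log B is positive and invertible, i.e., log A > log B. (The logarithm is strictly operator monotone on (0,∞).) -/
/-!
The strict inequality `B < A` leaves room for a factor: since `A - B` is bounded below by a positive
scalar and `B` is bounded above, `(1 + ε) • B ≤ A` for some `ε > 0`. The logarithm turns this factor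
into the positive additive gap `log (1 + ε)`, so ordinary operator monotonicity already gives
`log (1 + ε) + log B ≤ log A`.
-/

lemma exists_pos_algebraMap_le_of_isStrictlyPositive {A : Type*} [TopologicalSpace A] [Ring A]
    [StarRing A] [PartialOrder A] [StarOrderedRing A] [Algebra ℝ A] [NonnegSpectrumClass ℝ A]
    [ContinuousFunctionalCalculus ℝ A IsSelfAdjoint] {c : A} (hc : IsStrictlyPositive c) :
    ∃ r : ℝ, 0 < r ∧ algebraMap ℝ A r ≤ c := by
  nontriviality A using exists_gt (0 : ℝ)
  exact (CFC.exists_pos_algebraMap_le_iff hc.isSelfAdjoint).2 fun _ hx ↦ hc.spectrum_pos hx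

section CStarAlgebra

variable {A : Type*} [CStarAlgebra A] [PartialOrder A] [StarOrderedRing A] {a b c : A}

lemma exists_pos_smul_le_of_isStrictlyPositive (hb : IsSelfAdjoint b)
    (hc : IsStrictlyPositive c) : ∃ ε : ℝ, 0 < ε ∧ ε • b ≤ c := by
  obtain ⟨r, hr, hrc⟩ := exists_pos_algebraMap_le_of_isStrictlyPositive hc
  obtain ⟨ε, hε, hεr⟩ := exists_pos_mul_lt hr ‖b‖
  refine ⟨ε, hε, ?_⟩
  calc ε • b
      ≤ ε • algebraMap ℝ A ‖b‖ := smul_le_smul_of_nonneg_left hb.le_algebraMap_norm_self hε.le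
    _ = algebraMap ℝ A (‖b‖ * ε) := by rw [mul_comm, map_mul, Algebra.smul_def]
    _ ≤ algebraMap ℝ A r := algebraMap_mono A hεr.le
    _ ≤ c := hrc

lemma algebraMap_log_le_log_sub_log {t : ℝ} (ht : 0 < t) (hb : IsStrictlyPositive b)
    (hba : t • b ≤ a) : algebraMap ℝ A (Real.log t) ≤ CFC.log a - CFC.log b := by
  rw [le_sub_iff_add_le, ← CFC.log_smul' b ht hb]
  exact CFC.log_le_log hba (hb.smul ht)

theorem stmt18_general (hb : IsStrictlyPositive b) (hab : IsStrictlyPositive (a - b)) :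
    IsStrictlyPositive (CFC.log a - CFC.log b) := by
  obtain ⟨ε, hε, hεb⟩ := exists_pos_smul_le_of_isStrictlyPositive hb.isSelfAdjoint hab
  have hba : (1 + ε) • b ≤ a := by
    rw [add_smul, one_smul]
    exact le_sub_iff_add_le'.mp hεb
  have hgap : IsStrictlyPositive (algebraMap ℝ A (Real.log (1 + ε))) :=
    isStrictlyPositive_algebraMap (Real.log_pos (lt_add_of_pos_right 1 hε))
  exact hgap.of_le (algebraMap_log_le_log_sub_log (by positivity) hb hba)

end CStarAlgebra

/-- the logarithm is strictly operator monotone on `(0, ∞)`: if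
`A ≥ B > 0` and `A - B` is invertible, then `log A > log B`, i.e., `log A - log B`
is positive and invertible. -/
theorem stmt18 {H : Type*} [NormedAddCommGroup H] [InnerProductSpace ℂ H] [CompleteSpace H]
    (A B : H →L[ℂ] H) (hA : 0 ≤ A) (hB : 0 ≤ B) (hAu : IsUnit A) (hBu : IsUnit B)
    (hBA : B ≤ A) (hAB : IsUnit (A - B)) :
    cfc Real.log B ≤ cfc Real.log A ∧
    IsUnit (cfc Real.log A - cfc Real.log B) := by
  have hlog := stmt18_general (hBu.isStrictlyPositive hB)
    (hAB.isStrictlyPositive (sub_nonneg.mpr hBA))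
  exact ⟨sub_nonneg.mp hlog.nonneg, hlog.isUnit⟩
end
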